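/- arXiv:1502.05332 — 2 statements merged into one kernel-verified Lean document; each statement's English description precedes it below -/
import Mathlib

section
/- Let S be a set of 2k points in the plane in general position. If the number of non-crossing perfect matchings of S equals the k-th Catalan number C_k, then either S is in convex position, or k = 3 and S has the exceptional order type: exactly one point Q of S lies in the interior of the convex hull of S, and for every other point P of S, each of the two open half-planes bounded by the line through Q and P contains exactly 2 points of S. -/
open scoped Classical

/-- Points in the plane. -/
abbrev Pt : Type := ℝ × ℝ

/-- A finite planar point set is in *general position* if no three of its
points are collinear. -/
def GeneralPosition (S : Finset Pt) : Prop :=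
  ∀ p ∈ S, ∀ q ∈ S, ∀ r ∈ S, p ≠ q → p ≠ r → q ≠ r →
    ¬ Collinear ℝ ({p, q, r} : Set Pt)

/-- The closed straight-line segment spanned by an unordered pair of points. -/
noncomputable def seg : Sym2 Pt → Set Pt :=
  Sym2.lift ⟨fun a b => segment ℝ a b, fun a b => segment_symm ℝ a b⟩

/-- `M` is a non-crossing perfect matching of `S`: a partition of `S` into
unordered pairs (of distinct points) whose closed segments are pairwise disjoint. -/
def IsNCMatching (S : Finset Pt) (M : Finset (Sym2 Pt)) : Prop :=
  (∀ e ∈ M, ¬ e.IsDiag) ∧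
  (∀ e ∈ M, ∀ p, p ∈ e → p ∈ S) ∧
  (∀ p ∈ S, ∃! e, e ∈ M ∧ p ∈ e) ∧
  (∀ e ∈ M, ∀ f ∈ M, e ≠ f → Disjoint (seg e) (seg f))

/-- The number of non-crossing perfect matchings of `S`. -/
noncomputable def pm (S : Finset Pt) : ℕ :=
  Set.ncard {M : Finset (Sym2 Pt) | IsNCMatching S M}

/-- `S` is in convex position: no point of `S` lies in the convex hull of the
other points. -/
def ConvexPosition (S : Finset Pt) : Prop :=
  ∀ p ∈ S, p ∉ convexHull ℝ (↑(S.erase p) : Set Pt)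

/-- The signed side of `X` with respect to the directed line from `Q` to `P`.
The two open half-planes bounded by the line through `Q` and `P` are
`{X | 0 < sideOf Q P X}` and `{X | sideOf Q P X < 0}`. -/
def sideOf (Q P X : Pt) : ℝ :=
  (P.1 - Q.1) * (X.2 - Q.2) - (P.2 - Q.2) * (X.1 - Q.1)

/-- Segment `AB` pierces segment `CD`: the closed segments are disjoint, but the
affine line through `A` and `B` meets the closed segment `CD`. -/
def Pierces (A B C D : Pt) : Prop :=
  Disjoint (segment ℝ A B) (segment ℝ C D) ∧
  ((affineSpan ℝ ({A, B} : Set Pt) : Set Pt) ∩ segment ℝ C D).Nonempty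

/-- The matching `M` of `S` has the *piercing property*: it contains pairs
`{A,B}` and `{C,D}` with `A` on the boundary of the convex hull of `S`
and `AB` piercing `CD`. -/
def HasPiercing (S : Finset Pt) (M : Finset (Sym2 Pt)) : Prop :=
  ∃ A B C D : Pt, s(A, B) ∈ M ∧ s(C, D) ∈ M ∧
    A ∈ frontier (convexHull ℝ (S : Set Pt)) ∧ Pierces A B C D

/-- The exceptional order type with interior point `Q`: `Q` is the unique point
of `S` interior to the convex hull of `S`, and for every other point `P` of `S`
each open half-plane bounded by the line through `Q` and `P` contains exactly
two points of `S`. -/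
def ExceptionalAt (S : Finset Pt) (Q : Pt) : Prop :=
  (↑S ∩ interior (convexHull ℝ (S : Set Pt))) = {Q} ∧
  ∀ P ∈ S, P ≠ Q →
    (S.filter (fun X => 0 < sideOf Q P X)).card = 2 ∧
    (S.filter (fun X => sideOf Q P X < 0)).card = 2

/-- The exceptional order type of Figure 1. -/
def Exceptional (S : Finset Pt) : Prop :=
  ∃ Q ∈ S, ExceptionalAt S Q


section Geo

theorem s_rot (a b c : Pt) : sideOf a b c = sideOf b c a := by unfold sideOf; ring
theorem s_rot' (a b c : Pt) : sideOf a b c = sideOf c a b := by unfold sideOf; ring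
theorem s_swap (a b c : Pt) : sideOf a b c = - sideOf b a c := by unfold sideOf; ring
theorem s_swap' (a b c : Pt) : sideOf a b c = - sideOf a c b := by unfold sideOf; ring
@[simp] theorem s_aab (a b : Pt) : sideOf a a b = 0 := by unfold sideOf; ring
@[simp] theorem s_aba (a b : Pt) : sideOf a b a = 0 := by unfold sideOf; ring
@[simp] theorem s_abb (a b : Pt) : sideOf a b b = 0 := by unfold sideOf; ring

/-- Algebraic general position. -/
def GP (S : Finset Pt) : Prop :=
  ∀ p ∈ S, ∀ q ∈ S, ∀ r ∈ S, p ≠ q → p ≠ r → q ≠ r → sideOf p q r ≠ 0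

theorem GP.mono {S T : Finset Pt} (h : GP S) (hT : T ⊆ S) : GP T :=
  fun p hp q hq r hr => h p (hT hp) q (hT hq) r (hT hr)

theorem gp_of_general {S : Finset Pt} (h : GeneralPosition S) : GP S := by
  intro p hp q hq r hr h1 h2 h3 h0
  apply h p hp q hq r hr h1 h2 h3
  rw [collinear_iff_of_mem (p₀ := p) (by simp)]
  refine ⟨q - p, ?_⟩
  intro x hx
  simp only [Set.mem_insert_iff, Set.mem_singleton_iff] at hx
  rcases hx with rfl | rfl | rfl
  · exact ⟨0, by simp⟩
  · exact ⟨1, by simp⟩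
  · by_cases hq1 : q.1 - p.1 = 0
    · have hq2 : q.2 - p.2 ≠ 0 := by
        intro hq2
        apply h1
        ext <;> linarith
      have hx1 : x.1 - p.1 = 0 := by
        have : (q.2 - p.2) * (x.1 - p.1) = 0 := by
          unfold sideOf at h0; rw [hq1] at h0; linarith
        rcases mul_eq_zero.mp this with h | h
        · exact absurd h hq2
        · exact h
      refine ⟨(x.2 - p.2) / (q.2 - p.2), ?_⟩
      ext
      · simp [hq1]; linarith
      · simp; field_simp; ring
    · refine ⟨(x.1 - p.1) / (q.1 - p.1), ?_⟩
      unfold sideOf at h0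
      ext
      · simp; field_simp; ring
      · simp; field_simp; linarith

/-- `Q` lies strictly inside a triangle spanned by `S`. -/
def NonExt (S : Finset Pt) (Q : Pt) : Prop :=
  ∃ X ∈ S, ∃ Y ∈ S, ∃ Z ∈ S, 0 < sideOf X Y Q ∧ 0 < sideOf Y Z Q ∧ 0 < sideOf Z X Q

theorem NonExt.mono {S T : Finset Pt} {Q : Pt} (h : NonExt T Q) (hT : T ⊆ S) : NonExt S Q := by
  obtain ⟨X, hX, Y, hY, Z, hZ, h⟩ := h
  exact ⟨X, hT hX, Y, hT hY, Z, hT hZ, h⟩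

theorem ext_trans {S : Finset Pt} (hS : GP S) {A X Y Z : Pt} (hA : A ∈ S) (hext : ¬ NonExt S A)
    (hX : X ∈ S) (hY : Y ∈ S) (hZ : Z ∈ S) (h1 : 0 < sideOf A X Y) (h2 : 0 < sideOf A Y Z) :
    0 < sideOf A X Z := by
  by_contra hn
  have hAX : A ≠ X := by rintro rfl; simp at h1
  have hAZ : A ≠ Z := by rintro rfl; simp at h2
  have hXZ : X ≠ Z := by
    rintro rfl
    rw [s_swap'] at h2; linarith
  have := hS A hA X hX Z hZ hAX hAZ hXZ
  have h3 : sideOf A X Z < 0 := lt_of_le_of_ne (not_lt.mp hn) this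
  apply hext
  refine ⟨X, hX, Y, hY, Z, hZ, ?_, ?_, ?_⟩
  · rw [s_rot']; exact h1
  · rw [s_rot']; exact h2
  · rw [s_rot', s_swap']; linarith

theorem bary (U V X Y Z P : Pt) :
    sideOf Y Z P * sideOf U V X + sideOf Z X P * sideOf U V Y + sideOf X Y P * sideOf U V Z
      = sideOf X Y Z * sideOf U V P := by
  unfold sideOf; ring

theorem ext_of_edge {S : Finset Pt} {U V P : Pt}
    (h : ∀ X ∈ S, X ≠ U → X ≠ V → 0 < sideOf U V X) (hP : P = U ∨ P = V) : ¬ NonExt S P := by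
  rintro ⟨X, hX, Y, hY, Z, hZ, h1, h2, h3⟩
  have hb := bary U V X Y Z P
  have h0 : sideOf U V P = 0 := by rcases hP with rfl | rfl <;> simp
  rw [h0, mul_zero] at hb
  have key : ∀ W ∈ S, 0 ≤ sideOf U V W := by
    intro W hW
    by_cases hU : W = U
    · simp [hU]
    by_cases hV : W = V
    · simp [hV]
    exact (h W hW hU hV).le
  have key2 : ∀ W ∈ S, sideOf U V W = 0 → W = U ∨ W = V := by
    intro W hW hW0
    by_contra hn
    push Not at hn
    have := h W hW hn.1 hn.2
    linarith
  have a1 := mul_nonneg h2.le (key X hX)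
  have a2 := mul_nonneg h3.le (key Y hY)
  have a3 := mul_nonneg h1.le (key Z hZ)
  have b1 : sideOf Y Z P * sideOf U V X = 0 := by linarith
  have b2 : sideOf Z X P * sideOf U V Y = 0 := by linarith
  have b3 : sideOf X Y P * sideOf U V Z = 0 := by linarith
  have c1 := key2 X hX ((mul_eq_zero.mp b1).resolve_left h2.ne')
  have c2 := key2 Y hY ((mul_eq_zero.mp b2).resolve_left h3.ne')
  have c3 := key2 Z hZ ((mul_eq_zero.mp b3).resolve_left h1.ne')
  have d1 : X ≠ Y := by rintro rfl; simp at h1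
  have d2 : Y ≠ Z := by rintro rfl; simp at h2
  have d3 : Z ≠ X := by rintro rfl; simp at h3
  grind

theorem exit_start {S : Finset Pt} (hS : GP S) {A Q : Pt} (hA : A ∈ S) (hQ : Q ∈ S)
    (hAQ : A ≠ Q) (hne : NonExt S Q) :
    ∃ C ∈ S, ∃ D ∈ S, sideOf A Q C < 0 ∧ 0 < sideOf A Q D ∧ 0 < sideOf C D Q := by
  obtain ⟨X, hX, Y, hY, Z, hZ, h1, h2, h3⟩ := hne
  have nQ : ∀ W ∈ S, W ≠ A → W ≠ Q → sideOf A Q W ≠ 0 := fun W hW h1 h2 =>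
    hS A hA Q hQ W hW hAQ h1.symm h2.symm
  have eX : X ≠ Q := by rintro rfl; simp at h1
  have eY : Y ≠ Q := by rintro rfl; simp at h1
  have eZ : Z ≠ Q := by rintro rfl; simp at h2
  by_cases aX : X = A
  · subst aX
    exact ⟨Y, hY, Z, hZ, by rw [s_swap']; linarith, by rw [s_rot']; exact h3, h2⟩
  by_cases aY : Y = A
  · subst aY
    exact ⟨Z, hZ, X, hX, by rw [s_swap']; linarith, by rw [s_rot']; exact h1, h3⟩
  by_cases aZ : Z = A
  · subst aZ
    exact ⟨X, hX, Y, hY, by rw [s_swap']; linarith, by rw [s_rot']; exact h2, h1⟩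
  have hb := bary A Q X Y Z Q
  simp only [s_abb, mul_zero] at hb
  rcases lt_or_gt_of_ne (nQ X hX aX eX) with x | x <;>
  rcases lt_or_gt_of_ne (nQ Y hY aY eY) with y | y <;>
  rcases lt_or_gt_of_ne (nQ Z hZ aZ eZ) with z | z
  · have := mul_neg_of_pos_of_neg h2 x
    have := mul_neg_of_pos_of_neg h3 y
    have := mul_neg_of_pos_of_neg h1 z
    linarith
  · exact ⟨Y, hY, Z, hZ, y, z, h2⟩
  · exact ⟨X, hX, Y, hY, x, y, h1⟩
  · exact ⟨X, hX, Y, hY, x, y, h1⟩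
  · exact ⟨Z, hZ, X, hX, z, x, h3⟩
  · exact ⟨Y, hY, Z, hZ, y, z, h2⟩
  · exact ⟨Z, hZ, X, hX, z, x, h3⟩
  · have := mul_pos h2 x
    have := mul_pos h3 y
    have := mul_pos h1 z
    linarith

theorem exit_edge {S : Finset Pt} (hS : GP S) {A Q : Pt} (hA : A ∈ S) (hQ : Q ∈ S)
    (hAQ : A ≠ Q) (hne : NonExt S Q) :
    ∃ C ∈ S, ∃ D ∈ S, sideOf A Q C < 0 ∧ 0 < sideOf A Q D ∧
      ∀ X ∈ S, X ≠ C → X ≠ D → 0 < sideOf C D X := by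
  let P : Finset (Pt × Pt) := (S ×ˢ S).filter
    (fun z => sideOf A Q z.1 < 0 ∧ 0 < sideOf A Q z.2 ∧ 0 < sideOf z.1 z.2 Q)
  have hP : P.Nonempty := by
    obtain ⟨C, hC, D, hD, h⟩ := exit_start hS hA hQ hAQ hne
    exact ⟨(C, D), by simp only [P, Finset.mem_filter, Finset.mem_product]; exact ⟨⟨hC, hD⟩, h⟩⟩
  obtain ⟨⟨C, D⟩, hCD, hmax⟩ := Finset.exists_max_image P
    (fun z => sideOf z.1 z.2 Q / (sideOf A Q z.2 - sideOf A Q z.1)) hP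
  simp only [P, Finset.mem_filter, Finset.mem_product] at hCD hmax
  obtain ⟨⟨hC, hD⟩, c, d, q⟩ := hCD
  refine ⟨C, hC, D, hD, c, d, ?_⟩
  intro X hX hXC hXD
  by_contra hn
  have hCD : C ≠ D := by rintro rfl; linarith
  have hx : sideOf C D X < 0 :=
    lt_of_le_of_ne (not_lt.mp hn) (hS C hC D hD X hX hCD hXC.symm hXD.symm)
  have hXQ : X ≠ Q := by rintro rfl; linarith
  have hXA : X ≠ A := by
    rintro rfl
    have : sideOf C D X = sideOf C D Q + (sideOf X Q D - sideOf X Q C) := by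
      unfold sideOf; ring
    linarith
  rcases lt_or_gt_of_ne (hS A hA Q hQ X hX hAQ hXA.symm hXQ.symm) with x | x
  · have id1 : sideOf X D Q * (sideOf A Q D - sideOf A Q C)
        = sideOf C D Q * (sideOf A Q D - sideOf A Q X) - sideOf C D X * sideOf A Q D := by
      unfold sideOf; ring
    have p1 : 0 < sideOf C D Q * (sideOf A Q D - sideOf A Q X) := mul_pos q (by linarith)
    have p2 : sideOf C D X * sideOf A Q D < 0 := mul_neg_of_neg_of_pos hx d
    have p3 : 0 < sideOf X D Q := by
      apply pos_of_mul_pos_left (b := sideOf A Q D - sideOf A Q C) <;> linarith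
    have := hmax (X, D) ⟨⟨hX, hD⟩, x, d, p3⟩
    simp only at this
    rw [div_le_div_iff₀ (by linarith) (by linarith)] at this
    linarith
  · have id1 : sideOf C X Q * (sideOf A Q D - sideOf A Q C)
        = sideOf C D Q * (sideOf A Q X - sideOf A Q C) + sideOf C D X * sideOf A Q C := by
      unfold sideOf; ring
    have p1 : 0 < sideOf C D Q * (sideOf A Q X - sideOf A Q C) := mul_pos q (by linarith)
    have p2 : 0 < sideOf C D X * sideOf A Q C := mul_pos_of_neg_of_neg hx c
    have p3 : 0 < sideOf C X Q := by
      apply pos_of_mul_pos_left (b := sideOf A Q D - sideOf A Q C) <;> linarith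
    have := hmax (C, X) ⟨⟨hC, hX⟩, c, x, p3⟩
    simp only at this
    rw [div_le_div_iff₀ (by linarith) (by linarith)] at this
    linarith

end Geo

section Rank

/-- Points of `S` to the right of the line from `A` to `B`. -/
noncomputable def rightSet (S : Finset Pt) (A B : Pt) : Finset Pt :=
  S.filter (fun X => sideOf A B X < 0)

/-- Points of `S` to the left of the line from `A` to `B`. -/
noncomputable def leftSet (S : Finset Pt) (A B : Pt) : Finset Pt :=
  S.filter (fun X => 0 < sideOf A B X)

theorem mem_rightSet {S : Finset Pt} {A B X : Pt} :
    X ∈ rightSet S A B ↔ X ∈ S ∧ sideOf A B X < 0 := by simp [rightSet]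

theorem mem_leftSet {S : Finset Pt} {A B X : Pt} :
    X ∈ leftSet S A B ↔ X ∈ S ∧ 0 < sideOf A B X := by simp [leftSet]

theorem split_eq {S : Finset Pt} (hS : GP S) {A B : Pt} (hA : A ∈ S) (hB : B ∈ S) (hAB : A ≠ B) :
    (rightSet S A B ∪ ({A, B} ∪ leftSet S A B)) = S := by
  ext X
  simp only [Finset.mem_union, mem_rightSet, mem_leftSet, Finset.mem_insert, Finset.mem_singleton]
  constructor
  · rintro (h | (rfl | rfl) | h)
    · exact h.1
    · exact hA
    · exact hB
    · exact h.1
  · intro hX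
    by_cases h1 : X = A
    · tauto
    by_cases h2 : X = B
    · tauto
    rcases lt_or_gt_of_ne (hS A hA B hB X hX hAB (Ne.symm h1) (Ne.symm h2)) with h | h
    · tauto
    · tauto

theorem split_card {S : Finset Pt} (hS : GP S) {A B : Pt} (hA : A ∈ S) (hB : B ∈ S)
    (hAB : A ≠ B) : (rightSet S A B).card + (leftSet S A B).card + 2 = S.card := by
  conv_rhs => rw [← split_eq hS hA hB hAB]
  rw [Finset.card_union_of_disjoint, Finset.card_union_of_disjoint, Finset.card_pair hAB]
  · ring
  · rw [Finset.disjoint_left]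
    intro X hX hX'
    simp only [Finset.mem_insert, Finset.mem_singleton, mem_leftSet] at hX hX'
    rcases hX with rfl | rfl <;> simp at hX'
  · rw [Finset.disjoint_left]
    intro X hX hX'
    simp only [Finset.mem_insert, Finset.mem_singleton, mem_leftSet, mem_rightSet,
      Finset.mem_union] at hX hX'
    rcases hX' with (rfl | rfl) | h
    · simp at hX
    · simp at hX
    · linarith [hX.2, h.2]

theorem rank_lt {S : Finset Pt} (hS : GP S) {A X Y : Pt} (hA : A ∈ S) (hext : ¬ NonExt S A)
    (hX : X ∈ S) (hY : Y ∈ S) (h : 0 < sideOf A X Y) :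
    (rightSet S A X).card < (rightSet S A Y).card := by
  apply Finset.card_lt_card
  rw [Finset.ssubset_iff_of_subset]
  · refine ⟨X, ?_, ?_⟩
    · rw [mem_rightSet]
      exact ⟨hX, by rw [s_swap']; linarith⟩
    · simp [mem_rightSet]
  · intro Z hZ
    rw [mem_rightSet] at hZ ⊢
    refine ⟨hZ.1, ?_⟩
    have h1 : 0 < sideOf A Z X := by rw [s_swap']; linarith [hZ.2]
    have := ext_trans hS hA hext hZ.1 hX hY h1 h
    rw [s_swap']; linarith

theorem side_of_rank_lt {S : Finset Pt} (hS : GP S) {A X Y : Pt} (hA : A ∈ S)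
    (hext : ¬ NonExt S A) (hX : X ∈ S) (hY : Y ∈ S) (hXA : X ≠ A) (hYA : Y ≠ A)
    (h : (rightSet S A X).card < (rightSet S A Y).card) : 0 < sideOf A X Y := by
  have hXY : X ≠ Y := by rintro rfl; exact lt_irrefl _ h
  rcases lt_or_gt_of_ne (hS A hA X hX Y hY hXA.symm hYA.symm hXY) with h1 | h1
  · have := rank_lt hS hA hext hY hX (by rw [s_swap']; linarith)
    omega
  · exact h1

theorem rank_inj {S : Finset Pt} (hS : GP S) {A X Y : Pt} (hA : A ∈ S)
    (hext : ¬ NonExt S A) (hX : X ∈ S) (hY : Y ∈ S) (hXA : X ≠ A) (hYA : Y ≠ A)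
    (h : (rightSet S A X).card = (rightSet S A Y).card) : X = Y := by
  by_contra hXY
  rcases lt_or_gt_of_ne (hS A hA X hX Y hY hXA.symm hYA.symm hXY) with h1 | h1
  · have := rank_lt hS hA hext hY hX (by rw [s_swap']; linarith)
    omega
  · have := rank_lt hS hA hext hX hY h1
    omega

theorem rank_surj {S : Finset Pt} (hS : GP S) {A : Pt} (hA : A ∈ S)
    (hext : ¬ NonExt S A) {j : ℕ} (hj : j + 1 < S.card) :
    ∃ B ∈ S, B ≠ A ∧ (rightSet S A B).card = j := by
  have himg : (S.erase A).image (fun B => (rightSet S A B).card) = Finset.range (S.card - 1) := by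
    apply Finset.eq_of_subset_of_card_le
    · intro m hm
      simp only [Finset.mem_image, Finset.mem_erase] at hm
      obtain ⟨B, ⟨hBA, hB⟩, rfl⟩ := hm
      have := split_card hS hA hB hBA.symm
      simp only [Finset.mem_range]
      omega
    · rw [Finset.card_image_of_injOn, Finset.card_erase_of_mem hA, Finset.card_range]
      intro X hX Y hY h
      simp only [Finset.coe_erase, Set.mem_sdiff, Finset.mem_coe, Set.mem_singleton_iff] at hX hY
      exact rank_inj hS hA hext hX.1 hY.1 hX.2 hY.2 h
  have : j ∈ (S.erase A).image (fun B => (rightSet S A B).card) := by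
    rw [himg, Finset.mem_range]; omega
  simp only [Finset.mem_image, Finset.mem_erase] at this
  obtain ⟨B, ⟨hBA, hB⟩, h⟩ := this
  exact ⟨B, hB, hBA, h⟩

theorem exists_ext {S : Finset Pt} (hne : S.Nonempty) : ∃ A ∈ S, ¬ NonExt S A := by
  obtain ⟨P, hP, hmin⟩ := Finset.exists_min_image S (fun p => p.1) hne
  refine ⟨P, hP, ?_⟩
  rintro ⟨X, hX, Y, hY, Z, hZ, h1, h2, h3⟩
  have hb : sideOf Y Z P * (X.1 - P.1) + sideOf Z X P * (Y.1 - P.1)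
      + sideOf X Y P * (Z.1 - P.1) = 0 := by unfold sideOf; ring
  have a1 := mul_nonneg h2.le (sub_nonneg.mpr (hmin X hX))
  have a2 := mul_nonneg h3.le (sub_nonneg.mpr (hmin Y hY))
  have a3 := mul_nonneg h1.le (sub_nonneg.mpr (hmin Z hZ))
  have b1 : sideOf Y Z P * (X.1 - P.1) = 0 := by linarith
  have b2 : sideOf Z X P * (Y.1 - P.1) = 0 := by linarith
  have c1 : X.1 = P.1 := by linarith [(mul_eq_zero.mp b1).resolve_left h2.ne']
  have c2 : Y.1 = P.1 := by linarith [(mul_eq_zero.mp b2).resolve_left h3.ne']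
  have : sideOf X Y P = 0 := by unfold sideOf; rw [c1, c2]; ring
  linarith

end Rank

section Match

theorem side_seg {U V c d x : Pt} (hx : x ∈ segment ℝ c d) :
    ∃ a b : ℝ, 0 ≤ a ∧ 0 ≤ b ∧ a + b = 1 ∧
      sideOf U V x = a * sideOf U V c + b * sideOf U V d := by
  obtain ⟨a, b, ha, hb, hab, rfl⟩ := hx
  refine ⟨a, b, ha, hb, hab, ?_⟩
  have : b = 1 - a := by linarith
  subst this
  unfold sideOf
  simp
  ring

theorem seg_neg {U V x : Pt} {e : Sym2 Pt} (he : ∀ p ∈ e, sideOf U V p < 0) (hx : x ∈ seg e) :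
    sideOf U V x < 0 := by
  induction e using Sym2.ind with
  | _ c d =>
    have hx' : x ∈ segment ℝ c d := hx
    obtain ⟨a, b, ha, hb, hab, h⟩ := side_seg (U := U) (V := V) hx'
    have h1 := he c (by simp)
    have h2 := he d (by simp)
    rw [h]
    rcases ha.eq_or_lt with rfl | ha'
    · have : b = 1 := by linarith
      subst this; linarith
    · nlinarith

theorem seg_nonneg {U V x : Pt} {e : Sym2 Pt} (he : ∀ p ∈ e, 0 ≤ sideOf U V p) (hx : x ∈ seg e) :
    0 ≤ sideOf U V x := by
  induction e using Sym2.ind with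
  | _ c d =>
    have hx' : x ∈ segment ℝ c d := hx
    obtain ⟨a, b, ha, hb, hab, h⟩ := side_seg (U := U) (V := V) hx'
    have h1 := he c (by simp)
    have h2 := he d (by simp)
    rw [h]
    positivity

theorem glue {S₁ S₂ : Finset Pt} {M₁ M₂ : Finset (Sym2 Pt)} (h₁ : IsNCMatching S₁ M₁)
    (h₂ : IsNCMatching S₂ M₂) (U V : Pt) (hn : ∀ x ∈ S₁, sideOf U V x < 0)
    (hp : ∀ x ∈ S₂, 0 ≤ sideOf U V x) : IsNCMatching (S₁ ∪ S₂) (M₁ ∪ M₂) := by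
  obtain ⟨d₁, i₁, u₁, n₁⟩ := h₁
  obtain ⟨d₂, i₂, u₂, n₂⟩ := h₂
  have hdisj : ∀ e ∈ M₁, ∀ f ∈ M₂, Disjoint (seg e) (seg f) := by
    intro e he f hf
    rw [Set.disjoint_left]
    intro x hx hx'
    have := seg_neg (U := U) (V := V) (fun p hp' => hn p (i₁ e he p hp')) hx
    have := seg_nonneg (U := U) (V := V) (fun p hp' => hp p (i₂ f hf p hp')) hx'
    linarith
  refine ⟨?_, ?_, ?_, ?_⟩
  · intro e he
    rcases Finset.mem_union.mp he with h | h
    · exact d₁ e h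
    · exact d₂ e h
  · intro e he p hpe
    rcases Finset.mem_union.mp he with h | h
    · exact Finset.mem_union_left _ (i₁ e h p hpe)
    · exact Finset.mem_union_right _ (i₂ e h p hpe)
  · intro p hpS
    rcases Finset.mem_union.mp hpS with h | h
    · obtain ⟨e, ⟨he, hpe⟩, hu⟩ := u₁ p h
      refine ⟨e, ⟨Finset.mem_union_left _ he, hpe⟩, ?_⟩
      rintro f ⟨hf, hpf⟩
      rcases Finset.mem_union.mp hf with h' | h'
      · exact hu f ⟨h', hpf⟩
      · have := hp p (i₂ f h' p hpf)
        have := hn p h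
        linarith
    · obtain ⟨e, ⟨he, hpe⟩, hu⟩ := u₂ p h
      refine ⟨e, ⟨Finset.mem_union_right _ he, hpe⟩, ?_⟩
      rintro f ⟨hf, hpf⟩
      rcases Finset.mem_union.mp hf with h' | h'
      · have := hn p (i₁ f h' p hpf)
        have := hp p h
        linarith
      · exact hu f ⟨h', hpf⟩
  · intro e he f hf hef
    rcases Finset.mem_union.mp he with h | h <;> rcases Finset.mem_union.mp hf with h' | h'
    · exact n₁ e h f h' hef
    · exact hdisj e h f h'
    · exact (hdisj f h' e h).symm
    · exact n₂ e h f h' hef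

theorem pair_match {A B : Pt} (h : A ≠ B) : IsNCMatching {A, B} {s(A, B)} := by
  refine ⟨?_, ?_, ?_, ?_⟩
  · simpa using h
  · simp
  · intro p hp
    refine ⟨s(A, B), ?_, ?_⟩
    · simpa using hp
    · rintro f ⟨hf, _⟩
      simpa using hf
  · intro e he f hf hef
    simp only [Finset.mem_singleton] at he hf
    exact absurd (he.trans hf.symm) hef

/-- The finset of matchings. -/
noncomputable def NCM (S : Finset Pt) : Finset (Finset (Sym2 Pt)) :=
  S.sym2.powerset.filter (IsNCMatching S)

theorem mem_NCM {S : Finset Pt} {M : Finset (Sym2 Pt)} : M ∈ NCM S ↔ IsNCMatching S M := by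
  unfold NCM
  rw [Finset.mem_filter]
  refine ⟨fun h => h.2, fun h => ⟨?_, h⟩⟩
  rw [Finset.mem_powerset]
  intro e he
  rw [Finset.mem_sym2_iff]
  exact fun a ha => h.2.1 e he a ha

theorem pm_eq (S : Finset Pt) : pm S = (NCM S).card := by
  unfold pm
  rw [← Set.ncard_coe_finset]
  congr 1
  ext M
  simp [mem_NCM]

/-- Matching built from `AB` and matchings of the two sides. -/
theorem glue3 {S : Finset Pt} (hS : GP S) {A B : Pt} (hA : A ∈ S) (hB : B ∈ S) (hAB : A ≠ B)
    {M₁ M₂ : Finset (Sym2 Pt)} (h₁ : IsNCMatching (rightSet S A B) M₁)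
    (h₂ : IsNCMatching (leftSet S A B) M₂) :
    IsNCMatching S (M₁ ∪ ({s(A, B)} ∪ M₂)) := by
  have h3 : IsNCMatching ({A, B} ∪ leftSet S A B) ({s(A, B)} ∪ M₂) := by
    have := glue h₂ (pair_match hAB) B A ?_ ?_
    · rwa [Finset.union_comm, Finset.union_comm M₂] at this
    · intro x hx
      rw [s_swap]; linarith [(mem_leftSet.mp hx).2]
    · intro x hx
      simp only [Finset.mem_insert, Finset.mem_singleton] at hx
      rcases hx with rfl | rfl <;> simp
  have := glue h₁ h3 A B ?_ ?_
  · rwa [split_eq hS hA hB hAB] at this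
  · intro x hx
    exact (mem_rightSet.mp hx).2
  · intro x hx
    simp only [Finset.mem_union, Finset.mem_insert, Finset.mem_singleton, mem_leftSet] at hx
    rcases hx with (rfl | rfl) | h
    · simp
    · simp
    · exact h.2.le

end Match

section Lower

/-- `M` has a segment crossing the line through `A` and its partner. -/
def PiercedAt (A : Pt) (M : Finset (Sym2 Pt)) : Prop :=
  ∃ B C D, s(A, B) ∈ M ∧ s(C, D) ∈ M ∧ sideOf A B C < 0 ∧ 0 < sideOf A B D

theorem partner_unique {S : Finset Pt} {M : Finset (Sym2 Pt)} (h : IsNCMatching S M) {A B B' : Pt}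
    (h1 : s(A, B) ∈ M) (h2 : s(A, B') ∈ M) : B = B' := by
  have hA : A ∈ S := h.2.1 _ h1 A (by simp)
  obtain ⟨e, _, hu⟩ := h.2.2.1 A hA
  have e1 := hu _ ⟨h1, by simp⟩
  have e2 := hu _ ⟨h2, by simp⟩
  have := e1.trans e2.symm
  exact Sym2.congr_right.mp this

theorem recover {S : Finset Pt} {A B : Pt} {M₁ M₂ : Finset (Sym2 Pt)}
    (h₁ : IsNCMatching (rightSet S A B) M₁) (h₂ : IsNCMatching (leftSet S A B) M₂) :
    M₁ = (M₁ ∪ ({s(A, B)} ∪ M₂)).filter (fun e => ∀ p ∈ e, sideOf A B p < 0) ∧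
    M₂ = (M₁ ∪ ({s(A, B)} ∪ M₂)).filter (fun e => ∀ p ∈ e, 0 < sideOf A B p) := by
  have r1 : ∀ e ∈ M₁, ∀ p ∈ e, sideOf A B p < 0 := fun e he p hp =>
    (mem_rightSet.mp (h₁.2.1 e he p hp)).2
  have r2 : ∀ e ∈ M₂, ∀ p ∈ e, 0 < sideOf A B p := fun e he p hp =>
    (mem_leftSet.mp (h₂.2.1 e he p hp)).2
  have ex : ∀ e : Sym2 Pt, ∃ p, p ∈ e := fun e => by
    induction e using Sym2.ind with
    | _ c d => exact ⟨c, by simp⟩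
  constructor
  · ext e
    simp only [Finset.mem_filter, Finset.mem_union, Finset.mem_singleton]
    constructor
    · intro h
      exact ⟨Or.inl h, r1 e h⟩
    · rintro ⟨h | rfl | h, h'⟩
      · exact h
      · have := h' A (by simp)
        simp at this
      · obtain ⟨p, hp⟩ := ex e
        linarith [h' p hp, r2 e h p hp]
  · ext e
    simp only [Finset.mem_filter, Finset.mem_union, Finset.mem_singleton]
    constructor
    · intro h
      exact ⟨Or.inr (Or.inr h), r2 e h⟩
    · rintro ⟨h | rfl | h, h'⟩
      · obtain ⟨p, hp⟩ := ex e
        linarith [h' p hp, r1 e h p hp]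
      · have := h' A (by simp)
        simp at this
      · exact h

theorem lower_step {k : ℕ} {S : Finset Pt} (hS : GP S) (hcard : S.card = 2 * (k + 1)) {A : Pt}
    (hA : A ∈ S) (hext : ¬ NonExt S A)
    (ih : ∀ j ≤ k, ∀ T : Finset Pt, GP T → T.card = 2 * j → catalan j ≤ (NCM T).card) :
    catalan (k + 1) ≤ ((NCM S).filter (fun M => ¬ PiercedAt A M)).card := by
  have hB : ∀ i : Fin (k + 1), ∃ B ∈ S, B ≠ A ∧ (rightSet S A B).card = 2 * i := by
    intro i
    exact rank_surj hS hA hext (by have := i.2; omega)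
  choose B hBS hBA hBr using hB
  have hBl : ∀ i, (leftSet S A (B i)).card = 2 * (k - i) := by
    intro i
    have := split_card hS hA (hBS i) (hBA i).symm
    have := hBr i
    have := i.2
    omega
  rw [catalan_succ]
  calc _ ≤ ∑ i : Fin (k + 1), (NCM (rightSet S A (B i)) ×ˢ NCM (leftSet S A (B i))).card := by
        apply Finset.sum_le_sum
        intro i _
        rw [Finset.card_product]
        have := i.2
        exact Nat.mul_le_mul
          (ih i (by omega) _ (hS.mono (Finset.filter_subset _ _)) (hBr i))
          (ih (k - i) (by omega) _ (hS.mono (Finset.filter_subset _ _)) (hBl i))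
    _ = (Finset.univ.sigma
          (fun i => NCM (rightSet S A (B i)) ×ˢ NCM (leftSet S A (B i)))).card := by
        rw [Finset.card_sigma]
    _ ≤ _ := by
        apply Finset.card_le_card_of_injOn
          (fun z => z.2.1 ∪ ({s(A, B z.1)} ∪ z.2.2))
        · rintro ⟨i, M₁, M₂⟩ hz
          simp only [Finset.coe_sigma, Set.mem_sigma_iff, Finset.coe_univ, Set.mem_univ, true_and,
            Finset.mem_coe, Finset.mem_product, mem_NCM] at hz
          have hm := glue3 hS hA (hBS i) (hBA i).symm hz.1 hz.2
          simp only [Finset.coe_filter, Set.mem_ofPred_eq, mem_NCM]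
          refine ⟨hm, ?_⟩
          rintro ⟨B', C, D, h1, h2, h3, h4⟩
          have := partner_unique hm (B := B i) (by simp) h1
          subst this
          rcases Finset.mem_union.mp h2 with h | h
          · have := (mem_rightSet.mp (hz.1.2.1 _ h D (by simp))).2
            linarith
          rcases Finset.mem_union.mp h with h | h
          · rw [Finset.mem_singleton] at h
            have : C ∈ s(A, B i) := by rw [← h]; simp
            simp only [Sym2.mem_iff] at this
            rcases this with rfl | rfl <;> simp at h3
          · have := (mem_leftSet.mp (hz.2.2.1 _ h C (by simp))).2
            linarith
        · rintro ⟨i, M₁, M₂⟩ hz ⟨j, N₁, N₂⟩ hw heq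
          simp only [Finset.coe_sigma, Set.mem_sigma_iff, Finset.coe_univ, Set.mem_univ, true_and,
            Finset.mem_coe, Finset.mem_product, mem_NCM] at hz hw heq
          have hm := glue3 hS hA (hBS i) (hBA i).symm hz.1 hz.2
          have hij : B i = B j := by
            apply partner_unique hm (A := A)
            · simp
            · rw [heq]; simp
          have : i = j := by
            have h1 := hBr i
            rw [hij, hBr j] at h1
            ext; omega
          subst this
          have e1 := recover hz.1 hz.2
          have e2 := recover hw.1 hw.2
          rw [heq] at e1
          have a1 := e1.1.trans e2.1.symm
          have a2 := e1.2.trans e2.2.symm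
          rw [a1, a2]

theorem lower (k : ℕ) : ∀ S : Finset Pt, GP S → S.card = 2 * k → catalan k ≤ (NCM S).card := by
  induction k using Nat.strong_induction_on with
  | _ k ih =>
    intro S hS hcard
    rcases k with _ | k
    · simp only [mul_zero, Finset.card_eq_zero] at hcard
      subst hcard
      rw [catalan_zero]
      apply Finset.card_pos.mpr
      refine ⟨∅, mem_NCM.mpr ?_⟩
      refine ⟨?_, ?_, ?_, ?_⟩ <;> simp
    · obtain ⟨A, hA, hext⟩ := exists_ext (S := S) (by
        rw [← Finset.card_pos]; omega)
      refine (lower_step hS hcard hA hext (fun j hj T hT hc => ih j (by omega) T hT hc)).trans ?_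
      exact Finset.card_le_card (Finset.filter_subset _ _)

theorem exists_match {S : Finset Pt} (hS : GP S) (hc : Even S.card) :
    ∃ M, IsNCMatching S M := by
  obtain ⟨r, hr⟩ := hc
  have h := lower r S hS (by omega)
  have hpos : 0 < catalan r := by
    rw [catalan_eq_centralBinom_div]
    apply Nat.div_pos
    · exact Nat.le_of_dvd (Nat.centralBinom_pos r) (Nat.succ_dvd_centralBinom r)
    · omega
  obtain ⟨M, hM⟩ := Finset.card_pos.mp (lt_of_lt_of_le hpos h)
  exact ⟨M, mem_NCM.mp hM⟩

theorem no_pierce {k : ℕ} {S : Finset Pt} (hS : GP S) (hcard : S.card = 2 * k)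
    (hpm : pm S = catalan k) {A : Pt} (hA : A ∈ S) (hext : ¬ NonExt S A)
    {M : Finset (Sym2 Pt)} (hM : IsNCMatching S M) : ¬ PiercedAt A M := by
  intro hp
  rcases k with _ | k
  · have : 0 < S.card := Finset.card_pos.mpr ⟨A, hA⟩
    omega
  have h1 := lower_step hS hcard hA hext (fun j _ T hT hc => lower j T hT hc)
  rw [pm_eq] at hpm
  have h2 : ((NCM S).filter (fun M => ¬ PiercedAt A M)).card < (NCM S).card := by
    apply Finset.card_lt_card
    rw [Finset.ssubset_iff_of_subset (Finset.filter_subset _ _)]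
    exact ⟨M, mem_NCM.mpr hM, by simp [hp]⟩
  omega

end Lower

section Comb

theorem erase_right {T : Finset Pt} {A Q C D : Pt} (hD : 0 < sideOf A Q D) :
    rightSet ((T.erase C).erase D) A Q = (rightSet T A Q).erase C := by
  ext X
  simp only [mem_rightSet, Finset.mem_erase]
  constructor
  · rintro ⟨⟨h1, h2, h3⟩, h4⟩
    exact ⟨h2, h3, h4⟩
  · rintro ⟨h2, h3, h4⟩
    refine ⟨⟨?_, h2, h3⟩, h4⟩
    rintro rfl
    linarith

theorem erase_left {T : Finset Pt} {A Q C D : Pt} (hC : sideOf A Q C < 0) :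
    leftSet ((T.erase C).erase D) A Q = (leftSet T A Q).erase D := by
  ext X
  simp only [mem_leftSet, Finset.mem_erase]
  constructor
  · rintro ⟨⟨h1, h2, h3⟩, h4⟩
    exact ⟨h1, h3, h4⟩
  · rintro ⟨h2, h3, h4⟩
    refine ⟨⟨h2, ?_, h3⟩, h4⟩
    rintro rfl
    linarith

theorem add_edge {T : Finset Pt} {C D : Pt} (hC : C ∈ T) (hD : D ∈ T) (hCD : C ≠ D)
    (hedge : ∀ X ∈ T, X ≠ C → X ≠ D → 0 < sideOf C D X) {M : Finset (Sym2 Pt)}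
    (hM : IsNCMatching ((T.erase C).erase D) M) : IsNCMatching T (M ∪ {s(C, D)}) := by
  have := glue hM (pair_match hCD) D C ?_ ?_
  · have e : (T.erase C).erase D ∪ {C, D} = T := by
      ext X
      simp only [Finset.mem_union, Finset.mem_erase, Finset.mem_insert, Finset.mem_singleton]
      constructor
      · rintro (h | rfl | rfl)
        · exact h.2.2
        · exact hC
        · exact hD
      · intro h
        tauto
    rwa [e] at this
  · intro x hx
    simp only [Finset.mem_erase] at hx
    have := hedge x hx.2.2 hx.2.1 hx.1
    rw [s_swap]; linarith
  · intro x hx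
    simp only [Finset.mem_insert, Finset.mem_singleton] at hx
    rcases hx with rfl | rfl <;> simp

theorem odd_match {T : Finset Pt} (hT : GP T) (hev : Even T.card) {A Q : Pt} (hA : A ∈ T)
    (hQ : Q ∈ T) (hAQ : A ≠ Q) (hne : NonExt T Q) (hodd : Odd (rightSet T A Q).card) :
    ∃ M C D, IsNCMatching T M ∧ s(A, Q) ∈ M ∧ s(C, D) ∈ M ∧ sideOf A Q C < 0 ∧
      0 < sideOf A Q D := by
  obtain ⟨C, hC, D, hD, c, d, hedge⟩ := exit_edge hT hA hQ hAQ hne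
  have hCD : C ≠ D := by rintro rfl; linarith
  have hsub : (T.erase C).erase D ⊆ T :=
    (Finset.erase_subset _ _).trans (Finset.erase_subset _ _)
  have hT' := hT.mono hsub
  have hs := split_card hT hA hQ hAQ
  have hA' : A ∈ (T.erase C).erase D := by
    simp only [Finset.mem_erase]
    refine ⟨?_, ?_, hA⟩ <;> rintro rfl
    · simp at d
    · simp at c
  have hQ' : Q ∈ (T.erase C).erase D := by
    simp only [Finset.mem_erase]
    refine ⟨?_, ?_, hQ⟩ <;> rintro rfl
    · simp at d
    · simp at c
  have hcr : (rightSet ((T.erase C).erase D) A Q).card + 1 = (rightSet T A Q).card := by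
    rw [erase_right d]
    exact Finset.card_erase_add_one (mem_rightSet.mpr ⟨hC, c⟩)
  have hcl : (leftSet ((T.erase C).erase D) A Q).card + 1 = (leftSet T A Q).card := by
    rw [erase_left c]
    exact Finset.card_erase_add_one (mem_leftSet.mpr ⟨hD, d⟩)
  obtain ⟨M₁, h1⟩ := exists_match (S := rightSet ((T.erase C).erase D) A Q)
    (hT'.mono (Finset.filter_subset _ _)) (by grind)
  obtain ⟨M₂, h2⟩ := exists_match (S := leftSet ((T.erase C).erase D) A Q)
    (hT'.mono (Finset.filter_subset _ _)) (by grind)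
  have h3 := glue3 hT' hA' hQ' hAQ h1 h2
  refine ⟨_, C, D, add_edge hC hD hCD hedge h3, ?_, ?_, c, d⟩
  · simp
  · simp

/-- The hypotheses extracted from equality. -/
structure Tight (S : Finset Pt) : Prop where
  gp : GP S
  ev : Even S.card
  np : ∀ A ∈ S, ¬ NonExt S A → ∀ M, IsNCMatching S M → ¬ PiercedAt A M

variable {S : Finset Pt} {A B Q C D X P : Pt}

theorem right_even (h : Tight S) (hA : A ∈ S) (hext : ¬ NonExt S A) (hQ : Q ∈ S)
    (hne : NonExt S Q) : Even (rightSet S A Q).card := by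
  by_contra hn
  rw [Nat.not_even_iff_odd] at hn
  have hAQ : A ≠ Q := by rintro rfl; exact hext hne
  obtain ⟨M, C, D, hM, h1, h2, h3, h4⟩ := odd_match h.gp h.ev hA hQ hAQ hne hn
  exact h.np A hA hext M hM ⟨Q, C, D, h1, h2, h3, h4⟩

theorem ext_of_odd (h : Tight S) (hA : A ∈ S) (hext : ¬ NonExt S A) (hB : B ∈ S)
    (ho : Odd (rightSet S A B).card) : ¬ NonExt S B := by
  intro hn
  have := right_even h hA hext hB hn
  grind

/-- `CD` is the hull edge through which the ray `AQ` exits. -/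
structure Exit (S : Finset Pt) (A Q C D : Pt) : Prop where
  hC : C ∈ S
  hD : D ∈ S
  c : sideOf A Q C < 0
  d : 0 < sideOf A Q D
  edge : ∀ X ∈ S, X ≠ C → X ≠ D → 0 < sideOf C D X

theorem exit_not (h : Tight S) (hA : A ∈ S) (hext : ¬ NonExt S A) (hQ : Q ∈ S)
    (hne : NonExt S Q) (hx : Exit S A Q C D) : ¬ NonExt ((S.erase C).erase D) Q := by
  intro hn
  have hAQ : A ≠ Q := by rintro rfl; exact hext hne
  obtain ⟨hC, hD, c, d, hedge⟩ := hx
  have hCD : C ≠ D := by rintro rfl; linarith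
  have hsub : (S.erase C).erase D ⊆ S :=
    (Finset.erase_subset _ _).trans (Finset.erase_subset _ _)
  have hA' : A ∈ (S.erase C).erase D := by
    simp only [Finset.mem_erase]
    refine ⟨?_, ?_, hA⟩ <;> rintro rfl
    · simp at d
    · simp at c
  have hQ' : Q ∈ (S.erase C).erase D := by
    simp only [Finset.mem_erase]
    refine ⟨?_, ?_, hQ⟩ <;> rintro rfl
    · simp at d
    · simp at c
  have hcr : (rightSet ((S.erase C).erase D) A Q).card + 1 = (rightSet S A Q).card := by
    rw [erase_right d]
    exact Finset.card_erase_add_one (mem_rightSet.mpr ⟨hC, c⟩)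
  have hr := right_even h hA hext hQ hne
  have hcard : ((S.erase C).erase D).card + 1 + 1 = S.card := by
    rw [Finset.card_erase_add_one, Finset.card_erase_add_one hC]
    simp [hD, hCD.symm]
  have hev := h.ev
  obtain ⟨M, C', D', hM, h1, h2, h3, h4⟩ :=
    odd_match (h.gp.mono hsub) (by grind) hA' hQ' hAQ hn (by grind)
  refine h.np A hA hext _ (add_edge hC hD hCD hedge hM) ⟨Q, C, D, ?_, ?_, c, d⟩
  · simp [h1]
  · simp

theorem C_max (h : Tight S) (hA : A ∈ S) (hext : ¬ NonExt S A) (hQ : Q ∈ S)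
    (hx : Exit S A Q C D) (hX : X ∈ rightSet S A Q) (hXe : ¬ NonExt S X) :
    X = C ∨ 0 < sideOf A X C := by
  by_contra hn
  push Not at hn
  obtain ⟨hXS, x⟩ := mem_rightSet.mp hX
  have hXA : X ≠ A := by rintro rfl; simp at x
  have hCA : C ≠ A := by rintro rfl; have := hx.c; simp at this
  have hXD : X ≠ D := by rintro rfl; have := hx.d; linarith
  have h1 : sideOf A X C < 0 := lt_of_le_of_ne hn.2
    (h.gp A hA X hXS C hx.hC hXA.symm hCA.symm hn.1)
  have h2 : 0 < sideOf A X D := ext_trans h.gp hA hext hXS hQ hx.hD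
    (by rw [s_swap']; linarith) hx.d
  apply hXe
  refine ⟨A, hA, C, hx.hC, D, hx.hD, ?_, hx.edge X hXS hn.1 hXD, ?_⟩
  · rw [s_swap']; linarith
  · rw [s_rot]; exact h2

theorem D_min (h : Tight S) (hA : A ∈ S) (hext : ¬ NonExt S A) (hQ : Q ∈ S)
    (hx : Exit S A Q C D) (hX : X ∈ leftSet S A Q) (hXe : ¬ NonExt S X) :
    X = D ∨ 0 < sideOf A D X := by
  by_contra hn
  push Not at hn
  obtain ⟨hXS, x⟩ := mem_leftSet.mp hX
  have hXA : X ≠ A := by rintro rfl; simp at x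
  have hDA : D ≠ A := by rintro rfl; have := hx.d; simp at this
  have hXC : X ≠ C := by rintro rfl; have := hx.c; linarith
  have h1 : sideOf A D X < 0 := lt_of_le_of_ne hn.2
    (h.gp A hA D hx.hD X hXS hDA.symm hXA.symm hn.1.symm)
  have h2 : 0 < sideOf A C X := ext_trans h.gp hA hext hx.hC hQ hXS
    (by rw [s_swap']; linarith [hx.c]) x
  apply hXe
  refine ⟨A, hA, C, hx.hC, D, hx.hD, h2, hx.edge X hXS hXC hn.1, ?_⟩
  · rw [s_rot, s_swap']; linarith

theorem step_gen (h : Tight S) (hA : A ∈ S) (hext : ¬ NonExt S A) (hQ : Q ∈ S)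
    (hne : NonExt S Q) (hx : Exit S A Q C D) (hP : P ∈ rightSet S A Q) (hPC : P ≠ C)
    (hX : X ∈ rightSet S P Q) : X = D ∨ X ∈ rightSet S A Q := by
  by_contra hn
  push Not at hn
  obtain ⟨hXS, x⟩ := mem_rightSet.mp hX
  obtain ⟨hPS, p⟩ := mem_rightSet.mp hP
  have hAQ : A ≠ Q := by rintro rfl; exact hext hne
  have hXA : X ≠ A := by
    rintro rfl
    rw [s_rot', s_swap'] at x; linarith
  have hXQ : X ≠ Q := by rintro rfl; simp at x
  have h1 : 0 < sideOf A Q X := by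
    have h2 := hn.2
    rw [mem_rightSet] at h2
    push Not at h2
    exact lt_of_le_of_ne (h2 hXS) (h.gp A hA Q hQ X hXS hAQ hXA.symm hXQ.symm).symm
  apply exit_not h hA hext hQ hne hx
  have c := hx.c
  have d := hx.d
  refine ⟨A, ?_, P, ?_, X, ?_, ?_, ?_, ?_⟩
  · simp only [Finset.mem_erase]
    refine ⟨?_, ?_, hA⟩ <;> rintro rfl
    · simp at d
    · simp at c
  · simp only [Finset.mem_erase]
    refine ⟨?_, hPC, hPS⟩
    rintro rfl; linarith
  · simp only [Finset.mem_erase]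
    refine ⟨hn.1, ?_, hXS⟩
    rintro rfl; linarith
  · rw [s_swap']; linarith
  · rw [s_swap']; linarith
  · rw [s_rot]; exact h1

theorem get_exit (h : Tight S) (hA : A ∈ S) (hext : ¬ NonExt S A) (hQ : Q ∈ S)
    (hne : NonExt S Q) : ∃ C D, Exit S A Q C D := by
  have hAQ : A ≠ Q := by rintro rfl; exact hext hne
  obtain ⟨C, hC, D, hD, c, d, e⟩ := exit_edge h.gp hA hQ hAQ hne
  exact ⟨C, D, hC, hD, c, d, e⟩

theorem two_le_right (h : Tight S) (hA : A ∈ S) (hext : ¬ NonExt S A) (hQ : Q ∈ S)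
    (hne : NonExt S Q) : 2 ≤ (rightSet S A Q).card := by
  obtain ⟨C, D, hx⟩ := get_exit h hA hext hQ hne
  have h1 := right_even h hA hext hQ hne
  have h2 : 0 < (rightSet S A Q).card := Finset.card_pos.mpr ⟨C, mem_rightSet.mpr ⟨hx.hC, hx.c⟩⟩
  grind

theorem left_facts (h : Tight S) (hA : A ∈ S) (hext : ¬ NonExt S A) (hQ : Q ∈ S)
    (hne : NonExt S Q) : 2 ≤ (leftSet S A Q).card ∧ Even (leftSet S A Q).card := by
  have hAQ : A ≠ Q := by rintro rfl; exact hext hne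
  obtain ⟨C, D, hx⟩ := get_exit h hA hext hQ hne
  have h1 := right_even h hA hext hQ hne
  have h2 : 0 < (leftSet S A Q).card := Finset.card_pos.mpr ⟨D, mem_leftSet.mpr ⟨hx.hD, hx.d⟩⟩
  have h3 := split_card h.gp hA hQ hAQ
  have h4 := h.ev
  grind

theorem edge_of_rank_zero (hS : GP S) (hA : A ∈ S) (hB : B ∈ S) (hBA : B ≠ A)
    (h0 : (rightSet S A B).card = 0) : ∀ X ∈ S, X ≠ A → X ≠ B → 0 < sideOf A B X := by
  intro X hX hXA hXB
  by_contra hn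
  have h1 : sideOf A B X < 0 := lt_of_le_of_ne (not_lt.mp hn)
    (hS A hA B hB X hX hBA.symm hXA.symm hXB.symm)
  rw [Finset.card_eq_zero] at h0
  have : X ∈ rightSet S A B := mem_rightSet.mpr ⟨hX, h1⟩
  rw [h0] at this
  simp at this

theorem rank_zero_of_edge (hedge : ∀ X ∈ S, X ≠ A → X ≠ B → 0 < sideOf A B X) :
    (rightSet S A B).card = 0 := by
  rw [Finset.card_eq_zero, Finset.eq_empty_iff_forall_notMem]
  intro X hX
  obtain ⟨hXS, x⟩ := mem_rightSet.mp hX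
  have h1 : X ≠ A := by rintro rfl; simp at x
  have h2 : X ≠ B := by rintro rfl; simp at x
  linarith [hedge X hXS h1 h2]

theorem mem_right_of_rank (h : Tight S) (hA : A ∈ S) (hext : ¬ NonExt S A) (hQ : Q ∈ S)
    (hQA : Q ≠ A) (hX : X ∈ S) (hXA : X ≠ A)
    (hlt : (rightSet S A X).card < (rightSet S A Q).card) : X ∈ rightSet S A Q := by
  have := side_of_rank_lt h.gp hA hext hX hQ hXA hQA hlt
  rw [mem_rightSet]
  exact ⟨hX, by rw [s_swap']; linarith⟩

theorem step (h : Tight S) (hA : A ∈ S) (hB : B ∈ S) (hBA : B ≠ A)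
    (hedge : ∀ X ∈ S, X ≠ A → X ≠ B → 0 < sideOf A B X) (hQ : Q ∈ S) (hne : NonExt S Q) :
    (rightSet S B Q).card ≤ (rightSet S A Q).card := by
  have hext : ¬ NonExt S A := ext_of_edge hedge (Or.inl rfl)
  have hextB : ¬ NonExt S B := ext_of_edge hedge (Or.inr rfl)
  have hQA : Q ≠ A := by rintro rfl; exact hext hne
  have hr0 := rank_zero_of_edge hedge
  have hr2 := two_le_right h hA hext hQ hne
  have hBr : B ∈ rightSet S A Q := mem_right_of_rank h hA hext hQ hQA hB hBA (by omega)
  obtain ⟨C, D, hx⟩ := get_exit h hA hext hQ hne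
  have hs := split_card h.gp hA hQ hQA.symm
  obtain ⟨P, hP, hPA, hPr⟩ := rank_surj h.gp hA hext (j := 1) (by omega)
  have hPe := ext_of_odd h hA hext hP (by rw [hPr]; exact odd_one)
  have hBC : B ≠ C := by
    rintro rfl
    rcases C_max h hA hext hQ hx
      (mem_right_of_rank h hA hext hQ hQA hP hPA (by omega)) hPe with h1 | h1
    · subst h1; omega
    · have := rank_lt h.gp hA hext hP hB h1
      omega
  have hsub : rightSet S B Q ⊆ insert D ((rightSet S A Q).erase B) := by
    intro X hX
    rw [Finset.mem_insert, Finset.mem_erase]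
    rcases step_gen h hA hext hQ hne hx hBr hBC hX with h1 | h1
    · exact Or.inl h1
    · refine Or.inr ⟨?_, h1⟩
      rintro rfl
      have := (mem_rightSet.mp hX).2
      simp at this
  have h1 := Finset.card_le_card hsub
  have h2 := Finset.card_insert_le D ((rightSet S A Q).erase B)
  have h3 := Finset.card_erase_add_one hBr
  omega

theorem second_edge (h : Tight S) (hA : A ∈ S) (hext : ¬ NonExt S A) (hB : B ∈ S) (hBA : B ≠ A)
    (hB0 : (rightSet S A B).card = 0) (hP : P ∈ S) (hPA : P ≠ A)
    (hP1 : (rightSet S A P).card = 1) :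
    ∀ X ∈ S, X ≠ B → X ≠ P → 0 < sideOf B P X := by
  intro X hX hXB hXP
  have hPe := ext_of_odd h hA hext hP (by rw [hP1]; exact odd_one)
  have hBP : B ≠ P := by rintro rfl; omega
  have h1 : 0 < sideOf A B P := side_of_rank_lt h.gp hA hext hB hP hBA hPA (by omega)
  by_cases hXA : X = A
  · subst hXA
    rw [s_rot']; exact h1
  have e0 : (rightSet S A X).card ≠ 0 := fun e =>
    hXB (rank_inj h.gp hA hext hX hB hXA hBA (by omega))
  have e1 : (rightSet S A X).card ≠ 1 := fun e =>
    hXP (rank_inj h.gp hA hext hX hP hXA hPA (by omega))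
  have h2 : 0 < sideOf A P X := side_of_rank_lt h.gp hA hext hP hX hPA hXA (by omega)
  by_contra hn
  have h3 : sideOf B P X < 0 := lt_of_le_of_ne (not_lt.mp hn)
    (h.gp B hB P hP X hX hBP hXB.symm hXP.symm)
  apply hPe
  refine ⟨A, hA, B, hB, X, hX, h1, ?_, ?_⟩
  · rw [s_swap']; linarith
  · rw [s_rot]; exact h2

theorem card_lt_eight (h : Tight S) (hQ : Q ∈ S) (hne : NonExt S Q) : S.card < 8 := by
  by_contra h8
  push Not at h8
  obtain ⟨A, hAm, hmin⟩ := Finset.exists_min_image (S.filter (fun A => ¬ NonExt S A))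
    (fun A => (rightSet S A Q).card) (by
      obtain ⟨A, hA, he⟩ := exists_ext (S := S) ⟨Q, hQ⟩
      exact ⟨A, by simp [hA, he]⟩)
  obtain ⟨hA, hext⟩ := Finset.mem_filter.mp hAm
  have hQA : Q ≠ A := by rintro rfl; exact hext hne
  have hr2 := two_le_right h hA hext hQ hne
  have hre := right_even h hA hext hQ hne
  have hl := left_facts h hA hext hQ hne
  have hs := split_card h.gp hA hQ hQA.symm
  obtain ⟨C, D, hx⟩ := get_exit h hA hext hQ hne
  obtain ⟨B, hB, hBA, hB0⟩ := rank_surj h.gp hA hext (j := 0) (by omega)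
  obtain ⟨P, hP, hPA, hP1⟩ := rank_surj h.gp hA hext (j := 1) (by omega)
  obtain ⟨R, hR, hRA, hR3⟩ := rank_surj h.gp hA hext (j := 3) (by omega)
  have hPe := ext_of_odd h hA hext hP (by rw [hP1]; exact odd_one)
  have hRe := ext_of_odd h hA hext hR (by rw [hR3]; decide)
  have hedge2 := second_edge h hA hext hB hBA hB0 hP hPA hP1
  have hedge1 := edge_of_rank_zero h.gp hA hB hBA hB0
  have hBr : B ∈ rightSet S A Q := mem_right_of_rank h hA hext hQ hQA hB hBA (by omega)
  have hPr : P ∈ rightSet S A Q := mem_right_of_rank h hA hext hQ hQA hP hPA (by omega)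
  have hPB : P ≠ B := by rintro rfl; omega
  by_cases h4 : 4 ≤ (rightSet S A Q).card
  · have hRr : R ∈ rightSet S A Q := mem_right_of_rank h hA hext hQ hQA hR hRA (by omega)
    have hPC : P ≠ C := by
      rintro rfl
      rcases C_max h hA hext hQ hx hRr hRe with h1 | h1
      · subst h1; omega
      · have := rank_lt h.gp hA hext hR hP h1
        omega
    have hBQ : Q ≠ B := by
      rintro rfl; have := (mem_rightSet.mp hBr).2; simp at this
    have hPQ : Q ≠ P := by
      rintro rfl; have := (mem_rightSet.mp hPr).2; simp at this
    have hsub : rightSet S P Q ⊆ insert D (((rightSet S A Q).erase B).erase P) := by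
      intro X hX
      simp only [Finset.mem_insert, Finset.mem_erase]
      have hx2 := (mem_rightSet.mp hX).2
      rcases step_gen h hA hext hQ hne hx hPr hPC hX with h1 | h1
      · exact Or.inl h1
      · refine Or.inr ⟨?_, ?_, h1⟩
        · rintro rfl
          simp at hx2
        · rintro rfl
          have := hedge2 Q hQ hBQ hPQ
          rw [s_rot] at this
          linarith
    have h1 := Finset.card_le_card hsub
    have h2 := Finset.card_insert_le D (((rightSet S A Q).erase B).erase P)
    have h3 := Finset.card_erase_add_one hBr
    have h5 := Finset.card_erase_add_one (s := (rightSet S A Q).erase B) (a := P)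
      (by simp [hPB, hPr])
    have h6 := hmin P (by simp [hP, hPe])
    omega
  · have hr : (rightSet S A Q).card = 2 := by grind
    have hCr : C ∈ rightSet S A Q := mem_rightSet.mpr ⟨hx.hC, hx.c⟩
    have hCQ : (rightSet S A C).card < (rightSet S A Q).card :=
      rank_lt h.gp hA hext hx.hC hQ (by rw [s_swap']; linarith [hx.c])
    have hPC : P = C := by
      rcases C_max h hA hext hQ hx hPr hPe with h1 | h1
      · exact h1
      · have := rank_lt h.gp hA hext hP hx.hC h1
        omega
    have hQD : (rightSet S A Q).card < (rightSet S A D).card :=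
      rank_lt h.gp hA hext hQ hx.hD hx.d
    have hRl : R ∈ leftSet S A Q := mem_leftSet.mpr
      ⟨hR, side_of_rank_lt h.gp hA hext hQ hR hQA hRA (by omega)⟩
    have hRD : R = D := by
      rcases D_min h hA hext hQ hx hRl hRe with h1 | h1
      · exact h1
      · have := rank_lt h.gp hA hext hx.hD hR h1
        omega
    subst hPC hRD
    have hRP : R ≠ P := by rintro rfl; omega
    have s1 := step h hA hB hBA hedge1 hQ hne
    have s2 := step h hB hP hPB hedge2 hQ hne
    have s3 := step h hP hR hRP hx.edge hQ hne
    have hs' := split_card h.gp hA hR hRA.symm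
    have hsub : leftSet S A R ⊆ rightSet S R Q := by
      intro X hX
      obtain ⟨hXS, x⟩ := mem_leftSet.mp hX
      have d := hx.d
      have hXR : X ≠ R := by rintro rfl; simp at x
      have hXQ : X ≠ Q := by
        rintro rfl
        rw [s_swap'] at x; linarith
      have hRQ : R ≠ Q := by rintro rfl; simp at d
      rw [mem_rightSet]
      refine ⟨hXS, ?_⟩
      by_contra hn
      have h1 : 0 < sideOf R Q X := lt_of_le_of_ne (not_lt.mp hn)
        (h.gp R hR Q hQ X hXS hRQ hXR.symm hXQ.symm).symm
      apply hRe
      refine ⟨A, hA, Q, hQ, X, hXS, d, ?_, ?_⟩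
      · rw [s_rot']; exact h1
      · rw [s_rot]; exact x
    have := Finset.card_le_card hsub
    omega

theorem six_all (h : Tight S) (h6 : S.card = 6) (hQ : Q ∈ S) (hne : NonExt S Q) :
    ∀ P ∈ S, P ≠ Q → ¬ NonExt S P := by
  obtain ⟨A, hA, hext⟩ := exists_ext (S := S) ⟨Q, hQ⟩
  have hQA : Q ≠ A := by rintro rfl; exact hext hne
  have hr2 := two_le_right h hA hext hQ hne
  have hl := left_facts h hA hext hQ hne
  have hs := split_card h.gp hA hQ hQA.symm
  intro P hP hPQ
  by_cases hPA : P = A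
  · subst hPA; exact hext
  intro hPn
  have hs' := split_card h.gp hA hP (Ne.symm hPA)
  have hr2' := two_le_right h hA hext hP hPn
  have hl' := left_facts h hA hext hP hPn
  exact hPQ (rank_inj h.gp hA hext hP hQ hPA hQA (by omega))

theorem exists_edge (hS : GP S) (hA : A ∈ S) (hext : ¬ NonExt S A) (h2 : 2 ≤ S.card) :
    ∃ B ∈ S, B ≠ A ∧ ∀ X ∈ S, X ≠ A → X ≠ B → 0 < sideOf A B X := by
  obtain ⟨B, hB, hBA, hB0⟩ := rank_surj hS hA hext (j := 0) (by omega)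
  exact ⟨B, hB, hBA, edge_of_rank_zero hS hA hB hBA hB0⟩

end Comb

section Final

theorem side_comb (U V x y : Pt) (a b : ℝ) (hab : a + b = 1) :
    sideOf U V (a • x + b • y) = a * sideOf U V x + b * sideOf U V y := by
  have : b = 1 - a := by linarith
  subst this
  unfold sideOf
  simp
  ring

theorem side_cont (U V : Pt) : Continuous (fun x => sideOf U V x) := by
  unfold sideOf; fun_prop

theorem not_mem_hull {S : Finset Pt} {A B : Pt} (hBA : B ≠ A)
    (hedge : ∀ X ∈ S, X ≠ A → X ≠ B → 0 < sideOf A B X) :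
    A ∉ convexHull ℝ (↑(S.erase A) : Set Pt) := by
  intro hA
  have hconv : Convex ℝ {x : Pt | 0 < sideOf A B x ∨ x = B} := by
    intro x hx y hy a b ha hb hab
    rcases ha.eq_or_lt with rfl | ha'
    · have : b = 1 := by linarith
      subst this; simpa using hy
    rcases hb.eq_or_lt with rfl | hb'
    · have : a = 1 := by linarith
      subst this; simpa using hx
    change 0 < sideOf A B (a • x + b • y) ∨ a • x + b • y = B
    rw [side_comb _ _ _ _ _ _ hab]
    rcases hx with hx | rfl <;> rcases hy with hy | rfl
    · left; positivity
    · left; simp only [s_abb, mul_zero, add_zero]; positivity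
    · left; simp only [s_abb, mul_zero, zero_add]; positivity
    · right
      rw [← add_smul, hab, one_smul]
  have hsub : (↑(S.erase A) : Set Pt) ⊆ {x : Pt | 0 < sideOf A B x ∨ x = B} := by
    intro x hx
    have hx' : x ∈ S.erase A := hx
    rw [Finset.mem_erase] at hx'
    by_cases hxB : x = B
    · exact Or.inr hxB
    · exact Or.inl (hedge x hx'.2 hx'.1 hxB)
  have hmem : 0 < sideOf A B A ∨ A = B := convexHull_min hsub hconv hA
  rcases hmem with h | h
  · simp at h
  · exact hBA h.symm

theorem not_mem_interior {S : Finset Pt} {A B : Pt} (hBA : B ≠ A)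
    (hedge : ∀ X ∈ S, X ≠ A → X ≠ B → 0 < sideOf A B X) :
    A ∉ interior (convexHull ℝ (↑S : Set Pt)) := by
  intro hA
  have hconv : Convex ℝ {x : Pt | 0 ≤ sideOf A B x} := by
    intro x hx y hy a b ha hb hab
    change 0 ≤ sideOf A B (a • x + b • y)
    rw [side_comb _ _ _ _ _ _ hab]
    have hx' : 0 ≤ sideOf A B x := hx
    have hy' : 0 ≤ sideOf A B y := hy
    positivity
  have hsub : (↑S : Set Pt) ⊆ {x : Pt | 0 ≤ sideOf A B x} := by
    intro x hx
    change 0 ≤ sideOf A B x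
    by_cases hxA : x = A
    · simp [hxA]
    by_cases hxB : x = B
    · simp [hxB]
    exact (hedge x hx hxA hxB).le
  have hnh : {x : Pt | 0 ≤ sideOf A B x} ∈ nhds A :=
    Filter.mem_of_superset (mem_interior_iff_mem_nhds.mp hA) (convexHull_min hsub hconv)
  let g : ℝ → Pt := fun t => (A.1 + t * (B.2 - A.2), A.2 - t * (B.1 - A.1))
  have hg : Continuous g := by fun_prop
  have hg0 : g 0 = A := by simp [g]
  have h1 : g ⁻¹' {x : Pt | 0 ≤ sideOf A B x} ∈ nhds (0 : ℝ) := by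
    apply hg.continuousAt
    rw [hg0]; exact hnh
  obtain ⟨ε, hε, hball⟩ := Metric.mem_nhds_iff.mp h1
  have h2 : (ε / 2) ∈ Metric.ball (0 : ℝ) ε := by
    rw [Metric.mem_ball, Real.dist_eq, sub_zero, abs_of_pos (by linarith)]; linarith
  have h3 : 0 ≤ sideOf A B (g (ε / 2)) := hball h2
  have h4 : sideOf A B (g (ε / 2)) = -(ε / 2) * ((B.1 - A.1) ^ 2 + (B.2 - A.2) ^ 2) := by
    simp only [sideOf, g]; ring
  have h5 : 0 < (B.1 - A.1) ^ 2 + (B.2 - A.2) ^ 2 := by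
    by_contra hn
    apply hBA
    have q1 := sq_nonneg (B.1 - A.1)
    have q2 := sq_nonneg (B.2 - A.2)
    have e1 : (B.1 - A.1) ^ 2 = 0 := by linarith
    have e2 : (B.2 - A.2) ^ 2 = 0 := by linarith
    rw [sq_eq_zero_iff] at e1 e2
    ext <;> linarith
  have : 0 < (ε / 2) * ((B.1 - A.1) ^ 2 + (B.2 - A.2) ^ 2) := by positivity
  linarith

theorem mem_interior_of_nonExt {S : Finset Pt} {Q : Pt} (h : NonExt S Q) :
    Q ∈ interior (convexHull ℝ (↑S : Set Pt)) := by
  obtain ⟨X, hX, Y, hY, Z, hZ, h1, h2, h3⟩ := h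
  rw [mem_interior]
  refine ⟨{P | 0 < sideOf X Y P} ∩ ({P | 0 < sideOf Y Z P} ∩ {P | 0 < sideOf Z X P}), ?_, ?_,
    ⟨h1, h2, h3⟩⟩
  · rintro P ⟨p1, p2, p3⟩
    have p1 : 0 < sideOf X Y P := p1
    have p2 : 0 < sideOf Y Z P := p2
    have p3 : 0 < sideOf Z X P := p3
    have hsum : sideOf Y Z P + sideOf Z X P + sideOf X Y P = sideOf X Y Z := by
      unfold sideOf; ring
    have hpos : 0 < sideOf X Y Z := by linarith
    have hP : P = (sideOf Y Z P / sideOf X Y Z) • X + (sideOf Z X P / sideOf X Y Z) • Y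
        + (sideOf X Y P / sideOf X Y Z) • Z := by
      ext
      · simp only [Prod.fst_add, Prod.smul_fst, smul_eq_mul]
        field_simp
        unfold sideOf; ring
      · simp only [Prod.snd_add, Prod.smul_snd, smul_eq_mul]
        field_simp
        unfold sideOf; ring
    rw [hP]
    have hc := convex_convexHull ℝ (↑S : Set Pt)
    have hm := hc.sum_mem (t := Finset.univ)
      (w := ![sideOf Y Z P / sideOf X Y Z, sideOf Z X P / sideOf X Y Z,
        sideOf X Y P / sideOf X Y Z]) (z := ![X, Y, Z]) ?_ ?_ ?_
    · simpa [Fin.sum_univ_three] using hm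
    · intro i _
      fin_cases i
      · exact (div_pos p2 hpos).le
      · exact (div_pos p3 hpos).le
      · exact (div_pos p1 hpos).le
    · simp only [Fin.sum_univ_three, Matrix.cons_val]
      rw [← add_div, ← add_div, hsum, div_self hpos.ne']
    · intro i _
      fin_cases i
      · exact subset_convexHull ℝ _ hX
      · exact subset_convexHull ℝ _ hY
      · exact subset_convexHull ℝ _ hZ
  · exact (isOpen_lt continuous_const (side_cont _ _)).inter
      ((isOpen_lt continuous_const (side_cont _ _)).inter
        (isOpen_lt continuous_const (side_cont _ _)))

end Final

/-- If a set `S` of `2k` points in general position has exactly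
`C_k` non-crossing perfect matchings, then `S` is in convex position, or
`k = 3` and `S` has the exceptional order type. -/
theorem convexPosition_or_exceptional_of_pm_eq_catalan (k : ℕ) (S : Finset Pt)
    (hcard : S.card = 2 * k) (hgp : GeneralPosition S)
    (hpm : pm S = catalan k) :
    ConvexPosition S ∨ (k = 3 ∧ Exceptional S) := by
  have hS := gp_of_general hgp
  have ht : Tight S := ⟨hS, ⟨k, by omega⟩, fun A hA hext M hM =>
    no_pierce hS hcard hpm hA hext hM⟩
  by_cases hne : ∃ Q ∈ S, NonExt S Q
  · right
    obtain ⟨Q, hQ, hn⟩ := hne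
    have h8 := card_lt_eight ht hQ hn
    obtain ⟨A, hA, hext⟩ := exists_ext (S := S) ⟨Q, hQ⟩
    have hcnt : ∀ P ∈ S, ¬ NonExt S P → 2 ≤ (rightSet S P Q).card ∧ 2 ≤ (leftSet S P Q).card ∧
        (rightSet S P Q).card + (leftSet S P Q).card + 2 = S.card := by
      intro P hP hPe
      have hPQ : P ≠ Q := by rintro rfl; exact hPe hn
      exact ⟨two_le_right ht hP hPe hQ hn, (left_facts ht hP hPe hQ hn).1,
        split_card hS hP hQ hPQ⟩
    have hk : k = 3 := by
      have := hcnt A hA hext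
      omega
    subst hk
    have hall := six_all ht hcard hQ hn
    refine ⟨rfl, Q, hQ, ?_, ?_⟩
    · ext P
      simp only [Set.mem_inter_iff, Finset.mem_coe, Set.mem_singleton_iff]
      constructor
      · rintro ⟨hP, hPi⟩
        by_contra hPQ
        obtain ⟨B, _, hBP, hedge⟩ := exists_edge hS hP (hall P hP hPQ) (by omega)
        exact not_mem_interior hBP hedge hPi
      · rintro rfl
        exact ⟨hQ, mem_interior_of_nonExt hn⟩
    · intro P hP hPQ
      have hc := hcnt P hP (hall P hP hPQ)
      have e1 : S.filter (fun X => 0 < sideOf Q P X) = rightSet S P Q := by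
        unfold rightSet
        apply Finset.filter_congr
        intro X _
        rw [s_swap Q P X]
        constructor <;> intro h <;> linarith
      have e2 : S.filter (fun X => sideOf Q P X < 0) = leftSet S P Q := by
        unfold leftSet
        apply Finset.filter_congr
        intro X _
        rw [s_swap Q P X]
        constructor <;> intro h <;> linarith
      rw [e1, e2]
      omega
  · left
    push Not at hne
    intro p hp
    have h1 : 0 < S.card := Finset.card_pos.mpr ⟨p, hp⟩
    obtain ⟨B, _, hBp, hedge⟩ := exists_edge hS hp (hne p hp) (by omega)
    exact not_mem_hull hBp hedge
end

section
/- Let S be a set of 2k points in the plane in general position such that exactly one point of S lies in the interior of the convex hull of S. Then S has a non-crossing perfect matching with the piercing property, unless S has the exceptional order type: k = 3, and for every point P of S other than the unique interior point Q, each of the two open half-planes bounded by the line through Q and P contains exactly 2 points of S. -/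
open scoped Classical

lemma sideOf_combo (A B X Y : Pt) (a b : ℝ) (h : a + b = 1) :
    sideOf A B (a • X + b • Y) = a * sideOf A B X + b * sideOf A B Y := by
  have hb : b = 1 - a := by linarith
  subst hb
  simp only [sideOf, Prod.fst_add, Prod.snd_add, Prod.smul_fst, Prod.smul_snd, smul_eq_mul]
  ring

lemma sideOf_swap (A B X : Pt) : sideOf B A X = - sideOf A B X := by
  simp only [sideOf]; ring

lemma convex_neg (A B : Pt) : Convex ℝ {X : Pt | sideOf A B X < 0} := by
  intro X hX Y hY a b ha hb hab
  simp only [Set.mem_setOf_eq] at *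
  rw [sideOf_combo _ _ _ _ _ _ hab]
  rcases ha.eq_or_lt with h | h
  · subst h
    have : b = 1 := by linarith
    subst this; linarith
  · nlinarith

lemma convex_nonneg (A B : Pt) : Convex ℝ {X : Pt | 0 ≤ sideOf A B X} := by
  intro X hX Y hY a b ha hb hab
  simp only [Set.mem_setOf_eq] at *
  rw [sideOf_combo _ _ _ _ _ _ hab]
  positivity

lemma sep_side (A B : Pt) (T U : Finset Pt) (hT : ∀ X ∈ T, sideOf A B X < 0)
    (hU : ∀ X ∈ U, 0 ≤ sideOf A B X) :
    Disjoint (convexHull ℝ (T : Set Pt)) (convexHull ℝ (U : Set Pt)) := by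
  have h1 : convexHull ℝ (T : Set Pt) ⊆ {X : Pt | sideOf A B X < 0} :=
    convexHull_min (fun X hX => hT X hX) (convex_neg A B)
  have h2 : convexHull ℝ (U : Set Pt) ⊆ {X : Pt | 0 ≤ sideOf A B X} :=
    convexHull_min (fun X hX => hU X hX) (convex_nonneg A B)
  rw [Set.disjoint_left]
  intro X hX hX'
  have a := h1 hX
  have b := h2 hX'
  simp only [Set.mem_setOf_eq] at a b
  linarith

lemma convex_lexle (p : Pt) : Convex ℝ {X : Pt | X.1 < p.1 ∨ (X.1 = p.1 ∧ X.2 ≤ p.2)} := by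
  intro X hX Y hY a b ha hb hab
  simp only [Set.mem_setOf_eq, Prod.fst_add, Prod.snd_add, Prod.smul_fst, Prod.smul_snd,
    smul_eq_mul] at *
  obtain rfl : b = 1 - a := by linarith
  rcases ha.eq_or_lt with h | h
  · subst h; simpa using hY
  rcases hb.eq_or_lt with h' | h'
  · obtain rfl : a = 1 := by linarith
    simpa using hX
  rcases hX with hX | ⟨hX, hX2⟩ <;> rcases hY with hY | ⟨hY, hY2⟩
  · left; nlinarith
  · left; nlinarith
  · left; nlinarith
  · right; constructor
    · rw [hX, hY]; ring
    · nlinarith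

lemma convex_lexgt (p : Pt) : Convex ℝ {X : Pt | p.1 < X.1 ∨ (X.1 = p.1 ∧ p.2 < X.2)} := by
  intro X hX Y hY a b ha hb hab
  simp only [Set.mem_setOf_eq, Prod.fst_add, Prod.snd_add, Prod.smul_fst, Prod.smul_snd,
    smul_eq_mul] at *
  obtain rfl : b = 1 - a := by linarith
  rcases ha.eq_or_lt with h | h
  · subst h; simpa using hY
  rcases hb.eq_or_lt with h' | h'
  · obtain rfl : a = 1 := by linarith
    simpa using hX
  rcases hX with hX | ⟨hX, hX2⟩ <;> rcases hY with hY | ⟨hY, hY2⟩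
  · left; nlinarith
  · left; nlinarith
  · left; nlinarith
  · right; constructor
    · rw [hX, hY]; ring
    · nlinarith

lemma seg_subset (T : Finset Pt) (e : Sym2 Pt) (h : ∀ p, p ∈ e → p ∈ T) :
    seg e ⊆ convexHull ℝ (T : Set Pt) := by
  induction e using Sym2.ind with
  | _ a b =>
    exact segment_subset_convexHull (h a (by simp)) (h b (by simp))

lemma nc_union (T U : Finset Pt) (M N : Finset (Sym2 Pt)) (hM : IsNCMatching T M)
    (hN : IsNCMatching U N)
    (hd : Disjoint (convexHull ℝ (T : Set Pt)) (convexHull ℝ (U : Set Pt))) :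
    IsNCMatching (T ∪ U) (M ∪ N) := by
  obtain ⟨m1, m2, m3, m4⟩ := hM
  obtain ⟨n1, n2, n3, n4⟩ := hN
  have hTU : ∀ p, p ∈ T → p ∈ U → False := fun p h1 h2 =>
    Set.disjoint_left.1 hd (subset_convexHull ℝ _ h1) (subset_convexHull ℝ _ h2)
  refine ⟨?_, ?_, ?_, ?_⟩
  · intro e he
    rcases Finset.mem_union.1 he with h | h
    · exact m1 e h
    · exact n1 e h
  · intro e he p hp
    rcases Finset.mem_union.1 he with h | h
    · exact Finset.mem_union_left _ (m2 e h p hp)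
    · exact Finset.mem_union_right _ (n2 e h p hp)
  · intro p hp
    rcases Finset.mem_union.1 hp with h | h
    · obtain ⟨e, ⟨he, hpe⟩, hu⟩ := m3 p h
      refine ⟨e, ⟨Finset.mem_union_left _ he, hpe⟩, ?_⟩
      rintro f ⟨hf, hpf⟩
      rcases Finset.mem_union.1 hf with h' | h'
      · exact hu f ⟨h', hpf⟩
      · exact (hTU p h (n2 f h' p hpf)).elim
    · obtain ⟨e, ⟨he, hpe⟩, hu⟩ := n3 p h
      refine ⟨e, ⟨Finset.mem_union_right _ he, hpe⟩, ?_⟩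
      rintro f ⟨hf, hpf⟩
      rcases Finset.mem_union.1 hf with h' | h'
      · exact (hTU p (m2 f h' p hpf) h).elim
      · exact hu f ⟨h', hpf⟩
  · intro e he f hf hne
    rcases Finset.mem_union.1 he with h | h <;> rcases Finset.mem_union.1 hf with h' | h'
    · exact m4 e h f h' hne
    · exact hd.mono (seg_subset T e (m2 e h)) (seg_subset U f (n2 f h'))
    · exact hd.symm.mono (seg_subset U e (n2 e h)) (seg_subset T f (m2 f h'))
    · exact n4 e h f h' hne

lemma nc_pair (a b : Pt) (h : a ≠ b) : IsNCMatching {a, b} {s(a, b)} := by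
  refine ⟨?_, ?_, ?_, ?_⟩
  · intro e he
    rw [Finset.mem_singleton] at he
    subst he; simpa using h
  · intro e he p hp
    rw [Finset.mem_singleton] at he
    subst he; simpa using hp
  · intro p hp
    refine ⟨s(a, b), ⟨by simp, by simpa using hp⟩, ?_⟩
    rintro f ⟨hf, -⟩
    simpa using hf
  · intro e he f hf hne
    rw [Finset.mem_singleton] at he hf
    exact (hne (he.trans hf.symm)).elim

lemma exists_lexmin (T : Finset Pt) (h : T.Nonempty) :
    ∃ p ∈ T, ∀ X ∈ T, X ≠ p → p.1 < X.1 ∨ (X.1 = p.1 ∧ p.2 < X.2) := by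
  obtain ⟨p, hp, hmin⟩ := Finset.exists_min_image T (fun X => toLex X) h
  refine ⟨p, hp, fun X hX hne => ?_⟩
  have := lt_of_le_of_ne (hmin X hX) (fun h => hne (toLex.injective h).symm)
  rcases (Prod.Lex.lt_iff).1 this with h | ⟨h, h'⟩
  · exact Or.inl h
  · exact Or.inr ⟨h.symm, h'⟩

lemma matching_exists (n : ℕ) : ∀ T : Finset Pt, T.card = 2 * n → ∃ M, IsNCMatching T M := by
  induction n with
  | zero =>
    intro T hT
    have : T = ∅ := by simpa using hT
    subst this
    exact ⟨∅, by simp [IsNCMatching]⟩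
  | succ n ih =>
    intro T hT
    obtain ⟨p, hp, hpm⟩ := exists_lexmin T (Finset.card_pos.1 (by omega))
    have c1 : (T.erase p).card = 2 * n + 1 := by rw [Finset.card_erase_of_mem hp]; omega
    obtain ⟨q, hq, hqm⟩ := exists_lexmin (T.erase p) (Finset.card_pos.1 (by omega))
    have c2 : ((T.erase p).erase q).card = 2 * n := by rw [Finset.card_erase_of_mem hq]; omega
    obtain ⟨M, hM⟩ := ih _ c2
    have hqT := Finset.mem_of_mem_erase hq
    have hne := Finset.ne_of_mem_erase hq
    have hT' : T = {p, q} ∪ (T.erase p).erase q := by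
      ext X
      simp only [Finset.mem_union, Finset.mem_insert, Finset.mem_singleton, Finset.mem_erase]
      constructor
      · intro h; tauto
      · rintro ((rfl | rfl) | h)
        · exact hp
        · exact hqT
        · exact h.2.2
    refine ⟨{s(p, q)} ∪ M, ?_⟩
    rw [hT']
    refine nc_union _ _ _ _ (nc_pair p q hne.symm) hM ?_
    have h1 : convexHull ℝ (({p, q} : Finset Pt) : Set Pt) ⊆ _ :=
      convexHull_min (t := {X : Pt | X.1 < q.1 ∨ (X.1 = q.1 ∧ X.2 ≤ q.2)}) (by
        intro X hX
        simp only [Finset.coe_insert, Finset.coe_singleton, Set.mem_insert_iff,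
          Set.mem_singleton_iff] at hX
        rcases hX with rfl | rfl
        · rcases hpm q hqT hne with h | ⟨h, h'⟩
          · exact Or.inl h
          · exact Or.inr ⟨h.symm, h'.le⟩
        · exact Or.inr ⟨rfl, le_rfl⟩) (convex_lexle q)
    have h2 : convexHull ℝ (((T.erase p).erase q : Finset Pt) : Set Pt) ⊆ _ :=
      convexHull_min (t := {X : Pt | q.1 < X.1 ∨ (X.1 = q.1 ∧ q.2 < X.2)}) (by
        intro X hX
        rw [Finset.mem_coe] at hX
        exact hqm X (Finset.mem_of_mem_erase hX) (Finset.ne_of_mem_erase hX)) (convex_lexgt q)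
    rw [Set.disjoint_left]
    intro X hX hX'
    have a := h1 hX
    have b := h2 hX'
    simp only [Set.mem_setOf_eq] at a b
    rcases a with a | ⟨a, a'⟩ <;> rcases b with b | ⟨b, b'⟩ <;> linarith

lemma sideOf_left (A B : Pt) : sideOf A B A = 0 := by simp [sideOf]
lemma sideOf_right (A B : Pt) : sideOf A B B = 0 := by simp only [sideOf]; ring

lemma base_matching (P Q : Pt) (hPQ : P ≠ Q) (L R : Finset Pt) (hL : Even L.card)
    (hR : Even R.card) (hLs : ∀ X ∈ L, sideOf Q P X < 0) (hRs : ∀ X ∈ R, 0 < sideOf Q P X) :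
    ∃ M, IsNCMatching (L ∪ ({P, Q} ∪ R)) M ∧ s(P, Q) ∈ M := by
  obtain ⟨l, hl⟩ := hL
  obtain ⟨r, hr⟩ := hR
  obtain ⟨ML, hML⟩ := matching_exists l L (by omega)
  obtain ⟨MR, hMR⟩ := matching_exists r R (by omega)
  refine ⟨ML ∪ ({s(P, Q)} ∪ MR), ?_, by simp⟩
  refine nc_union _ _ _ _ hML (nc_union _ _ _ _ (nc_pair P Q hPQ) hMR ?_) ?_
  · refine (sep_side P Q R {P, Q} ?_ ?_).symm
    · intro X hX; rw [sideOf_swap]; linarith [hRs X hX]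
    · intro X hX
      simp only [Finset.mem_insert, Finset.mem_singleton] at hX
      rcases hX with rfl | rfl
      · rw [sideOf_left]
      · rw [sideOf_right]
  · refine sep_side Q P _ _ hLs ?_
    intro X hX
    simp only [Finset.mem_union, Finset.mem_insert, Finset.mem_singleton] at hX
    rcases hX with (rfl | rfl) | h
    · rw [sideOf_right]
    · rw [sideOf_left]
    · exact (hRs X h).le

lemma add_pair (C D : Pt) (hCD : C ≠ D) (T : Finset Pt) (M : Finset (Sym2 Pt))
    (hM : IsNCMatching T M) (h : ∀ X ∈ T, sideOf C D X < 0) :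
    IsNCMatching (T ∪ {C, D}) (M ∪ {s(C, D)}) := by
  refine nc_union _ _ _ _ hM (nc_pair C D hCD) (sep_side C D _ _ h ?_)
  intro X hX
  simp only [Finset.mem_insert, Finset.mem_singleton] at hX
  rcases hX with rfl | rfl
  · rw [sideOf_left]
  · rw [sideOf_right]

/-- a point with zero side is on the line -/
lemma on_line (A B X : Pt) (hne : A ≠ B) (h : sideOf A B X = 0) :
    X ∈ affineSpan ℝ ({A, B} : Set Pt) := by
  have hN : 0 < (B.1 - A.1) ^ 2 + (B.2 - A.2) ^ 2 := by
    by_contra hcon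
    have h1 : B.1 - A.1 = 0 := by nlinarith [sq_nonneg (B.1 - A.1), sq_nonneg (B.2 - A.2)]
    have h2 : B.2 - A.2 = 0 := by nlinarith [sq_nonneg (B.1 - A.1), sq_nonneg (B.2 - A.2)]
    exact hne (Prod.ext (by linarith) (by linarith))
  have key : AffineMap.lineMap A B (((X.1 - A.1) * (B.1 - A.1) + (X.2 - A.2) * (B.2 - A.2)) /
      ((B.1 - A.1) ^ 2 + (B.2 - A.2) ^ 2)) = X := by
    simp only [sideOf] at h
    ext
    · simp only [AffineMap.lineMap_apply, vsub_eq_sub, vadd_eq_add, Prod.fst_add, Prod.smul_fst,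
        Prod.fst_sub, smul_eq_mul]
      field_simp
      linear_combination (B.2 - A.2) * h
    · simp only [AffineMap.lineMap_apply, vsub_eq_sub, vadd_eq_add, Prod.snd_add, Prod.smul_snd,
        Prod.snd_sub, smul_eq_mul]
      field_simp
      linear_combination (-(B.1 - A.1)) * h
  rw [← key]
  exact AffineMap.lineMap_mem_affineSpan_pair _ _ _

lemma gp_side (S : Finset Pt) (hgp : GeneralPosition S) (A B X : Pt) (hA : A ∈ S) (hB : B ∈ S)
    (hX : X ∈ S) (h1 : A ≠ B) (h2 : A ≠ X) (h3 : B ≠ X) : sideOf A B X ≠ 0 := by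
  intro h
  have := collinear_insert_of_mem_affineSpan_pair (on_line A B X h1 h)
  refine hgp X hX A hA B hB h2.symm h3.symm h1 this

lemma interior_side (S : Finset Pt) (P Q : Pt) (hPQ : P ≠ Q)
    (hQ : Q ∈ interior (convexHull ℝ (S : Set Pt))) : ∃ X ∈ S, sideOf Q P X < 0 := by
  by_contra! hcon
  have h1 : convexHull ℝ (S : Set Pt) ⊆ {X : Pt | 0 ≤ sideOf Q P X} :=
    convexHull_min (fun X hX => hcon X hX) (convex_nonneg Q P)
  have hN : 0 < (P.1 - Q.1) ^ 2 + (P.2 - Q.2) ^ 2 := by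
    by_contra hcon
    have h1 : P.1 - Q.1 = 0 := by nlinarith [sq_nonneg (P.1 - Q.1), sq_nonneg (P.2 - Q.2)]
    have h2 : P.2 - Q.2 = 0 := by nlinarith [sq_nonneg (P.1 - Q.1), sq_nonneg (P.2 - Q.2)]
    exact hPQ (Prod.ext (by linarith) (by linarith))
  have hc : ContinuousAt (fun s : ℝ => ((Q.1 + s * (P.2 - Q.2), Q.2 - s * (P.1 - Q.1)) : Pt)) 0 := by
    fun_prop
  have hmem : convexHull ℝ (S : Set Pt) ∈
      nhds ((fun s : ℝ => ((Q.1 + s * (P.2 - Q.2), Q.2 - s * (P.1 - Q.1)) : Pt)) 0) := by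
    simpa using mem_interior_iff_mem_nhds.1 hQ
  have hev := hc.eventually_mem hmem
  rw [Metric.eventually_nhds_iff] at hev
  obtain ⟨ε, hε, hev⟩ := hev
  have := h1 (hev (y := ε / 2) (by rw [Real.dist_eq, sub_zero, abs_of_pos (by linarith)]; linarith))
  simp only [Set.mem_setOf_eq, sideOf] at this
  nlinarith [mul_pos hε hN]

lemma interior_side' (S : Finset Pt) (P Q : Pt) (hPQ : P ≠ Q)
    (hQ : Q ∈ interior (convexHull ℝ (S : Set Pt))) : ∃ X ∈ S, 0 < sideOf Q P X := by
  by_contra! hcon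
  have hr : Q ∈ interior (convexHull ℝ (S : Set Pt)) := hQ
  obtain ⟨X, hX, h⟩ := interior_side S (2 * Q.1 - P.1, 2 * Q.2 - P.2) Q (by
    intro h
    apply hPQ
    have h1 := congrArg Prod.fst h
    have h2 := congrArg Prod.snd h
    simp only at h1 h2
    exact Prod.ext (by linarith) (by linarith)) hQ
  have := hcon X hX
  simp only [sideOf] at h this
  nlinarith

lemma top_pair (S : Finset Pt) (hgp : GeneralPosition S) (P Q : Pt) (L R : Finset Pt)
    (hLS : L ⊆ S) (hRS : R ⊆ S)
    (hLs : ∀ X ∈ L, sideOf Q P X < 0) (hRs : ∀ X ∈ R, 0 < sideOf Q P X)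
    (A B : Pt) (hA : A ∈ L) (hB : B ∈ R) (hAB : sideOf A B Q < 0) :
    ∃ C ∈ L, ∃ D ∈ R, C ≠ D ∧ sideOf C D Q < 0 ∧ sideOf C D P < 0 ∧
      ∀ X ∈ L ∪ R, X ≠ C → X ≠ D → sideOf C D X < 0 := by
  obtain ⟨⟨C, D⟩, hCD, hmax⟩ := Finset.exists_max_image (L ×ˢ R)
    (fun Z => - sideOf Z.1 Z.2 Q / (sideOf Q P Z.2 - sideOf Q P Z.1))
    ⟨(A, B), Finset.mem_product.2 ⟨hA, hB⟩⟩
  obtain ⟨hC, hD⟩ := Finset.mem_product.1 hCD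
  simp only at hC hD
  have hmax' : ∀ X ∈ L, ∀ Y ∈ R, - sideOf X Y Q * (sideOf Q P D - sideOf Q P C) ≤
      - sideOf C D Q * (sideOf Q P Y - sideOf Q P X) := by
    intro X hX Y hY
    have := hmax (X, Y) (Finset.mem_product.2 ⟨hX, hY⟩)
    simp only at this
    rwa [div_le_div_iff₀ (by linarith [hLs X hX, hRs Y hY]) (by linarith [hLs C hC, hRs D hD])]
      at this
  have hCl := hLs C hC
  have hDr := hRs D hD
  have hne : C ≠ D := by rintro rfl; linarith
  have hQ : sideOf C D Q < 0 := by
    have h := hmax' A hA B hB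
    have h1 : 0 < sideOf Q P D - sideOf Q P C := by linarith
    have h2 : 0 < sideOf Q P B - sideOf Q P A := by linarith [hLs A hA, hRs B hB]
    by_contra hcon
    push Not at hcon
    nlinarith [mul_pos (neg_pos.2 hAB) h1, mul_nonneg hcon h2.le]
  refine ⟨C, hC, D, hD, hne, hQ, ?_, ?_⟩
  · have : sideOf C D P = sideOf C D Q - (sideOf Q P D - sideOf Q P C) := by
      simp only [sideOf]; ring
    linarith
  · intro X hX hXC hXD
    have hXS : X ∈ S := (Finset.union_subset hLS hRS) hX
    refine lt_of_le_of_ne ?_ (gp_side S hgp C D X (hLS hC) (hRS hD) hXS hne hXC.symm hXD.symm)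
    rcases Finset.mem_union.1 hX with h | h
    · have h1 := hmax' X h D hD
      have h2 : - sideOf X D Q * (sideOf Q P D - sideOf Q P C) +
        sideOf C D Q * (sideOf Q P D - sideOf Q P X) = sideOf Q P D * sideOf C D X := by
        simp only [sideOf]; ring
      by_contra hcon
      push Not at hcon
      nlinarith [mul_pos hDr hcon]
    · have h1 := hmax' C hC X h
      have h2 : - sideOf C X Q * (sideOf Q P D - sideOf Q P C) +
        sideOf C D Q * (sideOf Q P X - sideOf Q P C) = - sideOf Q P C * sideOf C D X := by
        simp only [sideOf]; ring
      by_contra hcon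
      push Not at hcon
      nlinarith [mul_pos (neg_pos.2 hCl) hcon]

lemma pierce_of (P Q C D : Pt) (hPQ : P ≠ Q) (hC : sideOf Q P C < 0) (hD : 0 < sideOf Q P D)
    (hQ : sideOf C D Q < 0) (hP : sideOf C D P < 0) : Pierces P Q C D := by
  constructor
  · have := sep_side C D {P, Q} {C, D} (by
      intro X hX
      simp only [Finset.mem_insert, Finset.mem_singleton] at hX
      rcases hX with rfl | rfl
      · exact hP
      · exact hQ) (by
      intro X hX
      simp only [Finset.mem_insert, Finset.mem_singleton] at hX
      rcases hX with rfl | rfl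
      · rw [sideOf_left]
      · rw [sideOf_right])
    simpa [convexHull_pair] using this
  · have hpos : 0 < sideOf Q P D - sideOf Q P C := by linarith
    have hsum : sideOf Q P D / (sideOf Q P D - sideOf Q P C) +
        (- sideOf Q P C) / (sideOf Q P D - sideOf Q P C) = 1 := by
      rw [← add_div, ← sub_eq_add_neg, div_self hpos.ne']
    refine ⟨(sideOf Q P D / (sideOf Q P D - sideOf Q P C)) • C +
      ((- sideOf Q P C) / (sideOf Q P D - sideOf Q P C)) • D, ?_, ?_⟩
    · rw [Set.pair_comm]
      refine on_line Q P _ hPQ.symm ?_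
      rw [sideOf_combo _ _ _ _ _ _ hsum]
      ring
    · exact ⟨_, _, div_nonneg hD.le hpos.le, div_nonneg (by linarith) hpos.le, hsum, rfl⟩

lemma comb_count (L R : Finset Pt) (t : Pt → ℝ) (hinj : ∀ X ∈ L, ∀ Y ∈ L, t X = t Y → X = Y)
    (hpar : ∀ A ∈ L, Even ((L.filter (fun X => t A < t X)).card +
      (R.filter (fun B => 0 < t A + t B)).card)) (m : ℕ) :
    ∀ A ∈ L, (L.filter (fun X => t X < t A)).card = m →
      m ≤ (R.filter (fun B => 0 < t A + t B)).card := by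
  induction m with
  | zero => intros; omega
  | succ m ih =>
    intro A hA hcard
    obtain ⟨A', hA', hmax⟩ := Finset.exists_max_image (L.filter (fun X => t X < t A)) t
      (Finset.card_pos.1 (by omega))
    obtain ⟨hA'L, hlt⟩ := Finset.mem_filter.1 hA'
    have e1 : L.filter (fun X => t X < t A') = (L.filter (fun X => t X < t A)).erase A' := by
      ext X
      simp only [Finset.mem_filter, Finset.mem_erase]
      constructor
      · rintro ⟨h1, h2⟩
        exact ⟨fun h => by subst h; exact lt_irrefl _ h2, h1, h2.trans hlt⟩
      · rintro ⟨h1, h2, h3⟩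
        refine ⟨h2, lt_of_le_of_ne (hmax X (Finset.mem_filter.2 ⟨h2, h3⟩)) ?_⟩
        exact fun h => h1 (hinj X h2 A' hA'L h)
    have e2 : L.filter (fun X => t A' < t X) = insert A (L.filter (fun X => t A < t X)) := by
      ext X
      simp only [Finset.mem_filter, Finset.mem_insert]
      constructor
      · rintro ⟨h1, h2⟩
        by_cases hXA : X = A
        · exact Or.inl hXA
        · refine Or.inr ⟨h1, ?_⟩
          rcases lt_trichotomy (t A) (t X) with h | h | h
          · exact h
          · exact (hXA (hinj X h1 A hA h.symm)).elim
          · have := hmax X (Finset.mem_filter.2 ⟨h1, h⟩)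
            linarith
      · rintro (rfl | ⟨h1, h2⟩)
        · exact ⟨hA, hlt⟩
        · exact ⟨h1, hlt.trans h2⟩
    have c1 := ih A' hA'L (by rw [e1, Finset.card_erase_of_mem hA']; omega)
    have c2 : (L.filter (fun X => t A' < t X)).card = (L.filter (fun X => t A < t X)).card + 1 := by
      rw [e2, Finset.card_insert_of_notMem (by simp)]
    have c3 : (R.filter (fun B => 0 < t A' + t B)).card ≤
        (R.filter (fun B => 0 < t A + t B)).card := by
      apply Finset.card_le_card
      intro B hB
      rw [Finset.mem_filter] at hB ⊢
      exact ⟨hB.1, by linarith [hB.2]⟩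
    obtain ⟨u, hu⟩ := hpar A hA
    obtain ⟨v, hv⟩ := hpar A' hA'L
    omega

lemma comb (L R : Finset Pt) (t : Pt → ℝ) (hinj : ∀ X ∈ L, ∀ Y ∈ L, t X = t Y → X = Y)
    (hpar : ∀ A ∈ L, Even ((L.filter (fun X => t A < t X)).card +
      (R.filter (fun B => 0 < t A + t B)).card)) (hL : 4 ≤ L.card) (C D : Pt) (hC : C ∈ L) :
    ∃ A ∈ L, A ≠ C ∧ ∃ B ∈ R, B ≠ D ∧ 0 < t A + t B := by
  have c := Finset.card_erase_of_mem hC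
  obtain ⟨A, hA, hmax⟩ := Finset.exists_max_image (L.erase C) t (Finset.card_pos.1 (by omega))
  have hAL := Finset.mem_of_mem_erase hA
  have c2 := Finset.card_erase_of_mem hA
  have hle : ((L.erase C).erase A).card ≤ (L.filter (fun X => t X < t A)).card := by
    apply Finset.card_le_card
    intro X hX
    have h1 := Finset.mem_of_mem_erase hX
    have h2 := Finset.mem_of_mem_erase h1
    refine Finset.mem_filter.2 ⟨h2, lt_of_le_of_ne (hmax X h1) ?_⟩
    exact fun h => Finset.ne_of_mem_erase hX (hinj X h2 A hAL h)
  have := comb_count L R t hinj hpar _ A hAL rfl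
  obtain ⟨B, hB, hBD⟩ := Finset.exists_mem_ne
    (s := R.filter (fun B => 0 < t A + t B)) (by omega) D
  rw [Finset.mem_filter] at hB
  exact ⟨A, hAL, Finset.ne_of_mem_erase hA, B, hB.1, hBD, hB.2⟩

/-- height coordinate -/
def ycoord (Q P X : Pt) : ℝ := (X.1 - Q.1) * (Q.1 - P.1) + (X.2 - Q.2) * (Q.2 - P.2)

/-- slope -/
noncomputable def slp (Q P X : Pt) : ℝ := ycoord Q P X / |sideOf Q P X|

lemma normsq_pos (P Q : Pt) (hPQ : P ≠ Q) : 0 < (P.1 - Q.1) ^ 2 + (P.2 - Q.2) ^ 2 := by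
  by_contra hcon
  have h1 : P.1 - Q.1 = 0 := by nlinarith [sq_nonneg (P.1 - Q.1), sq_nonneg (P.2 - Q.2)]
  have h2 : P.2 - Q.2 = 0 := by nlinarith [sq_nonneg (P.1 - Q.1), sq_nonneg (P.2 - Q.2)]
  exact hPQ (Prod.ext (by linarith) (by linarith))

lemma side_xy (P Q A X : Pt) : sideOf Q A X * ((P.1 - Q.1) ^ 2 + (P.2 - Q.2) ^ 2) =
    sideOf Q P A * ycoord Q P X - ycoord Q P A * sideOf Q P X := by
  simp only [sideOf, ycoord]; ring

lemma iff_of_mul {a n b : ℝ} (hn : 0 < n) (h : a * n = b) : (0 < a ↔ 0 < b) := by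
  subst h; constructor
  · intro h; positivity
  · intro h; exact pos_of_mul_pos_left h hn.le

lemma slp_RR (P Q A X : Pt) (hPQ : P ≠ Q) (hA : 0 < sideOf Q P A) (hX : 0 < sideOf Q P X) :
    0 < sideOf Q A X ↔ slp Q P A < slp Q P X := by
  rw [iff_of_mul (normsq_pos P Q hPQ) (side_xy P Q A X), slp, slp, abs_of_pos hA, abs_of_pos hX,
    div_lt_div_iff₀ hA hX, sub_pos, mul_comm (sideOf Q P A)]

lemma slp_LL (P Q A X : Pt) (hPQ : P ≠ Q) (hA : sideOf Q P A < 0) (hX : sideOf Q P X < 0) :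
    sideOf Q A X < 0 ↔ slp Q P A < slp Q P X := by
  have := side_xy P Q A X
  rw [← neg_pos, iff_of_mul (a := - sideOf Q A X)
    (b := - (sideOf Q P A * ycoord Q P X - ycoord Q P A * sideOf Q P X))
    (normsq_pos P Q hPQ) (by rw [← this]; ring), slp, slp, abs_of_neg hA, abs_of_neg hX,
    div_lt_div_iff₀ (by linarith) (by linarith)]
  constructor <;> intro h <;> linarith

lemma slp_sum (P Q A X : Pt) (hA : sideOf Q P A < 0) (hX : 0 < sideOf Q P X) :
    0 < slp Q P A + slp Q P X ↔
      0 < - (sideOf Q P A * ycoord Q P X - ycoord Q P A * sideOf Q P X) := by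
  have hA' : 0 < - sideOf Q P A := by linarith
  rw [slp, slp, abs_of_neg hA, abs_of_pos hX, div_add_div _ _ hA'.ne' hX.ne',
    div_pos_iff_of_pos_right (by positivity)]
  constructor <;> intro h <;> linarith

lemma slp_LR (P Q A X : Pt) (hPQ : P ≠ Q) (hA : sideOf Q P A < 0) (hX : 0 < sideOf Q P X) :
    sideOf Q A X < 0 ↔ 0 < slp Q P A + slp Q P X := by
  have := side_xy P Q A X
  rw [slp_sum P Q A X hA hX, ← neg_pos, iff_of_mul (a := - sideOf Q A X)
    (b := - (sideOf Q P A * ycoord Q P X - ycoord Q P A * sideOf Q P X))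
    (normsq_pos P Q hPQ) (by rw [← this]; ring)]

lemma side_rot (A B Q : Pt) : sideOf A B Q = sideOf Q A B := by simp only [sideOf]; ring

lemma slp_RL (P Q A X : Pt) (hPQ : P ≠ Q) (hA : 0 < sideOf Q P A) (hX : sideOf Q P X < 0) :
    0 < sideOf Q A X ↔ 0 < slp Q P A + slp Q P X := by
  rw [add_comm, ← slp_LR P Q X A hPQ hX hA]
  have : sideOf Q A X = - sideOf Q X A := by simp only [sideOf]; ring
  rw [this, neg_pos]

set_option maxHeartbeats 2000000 in
theorem piercing_matching_of_one_interior_point (k : ℕ) (S : Finset Pt)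
    (hcard : S.card = 2 * k) (hgp : GeneralPosition S) (Q : Pt) (hQ : Q ∈ S)
    (hint : (↑S ∩ interior (convexHull ℝ (S : Set Pt))) = {Q}) :
    (∃ M : Finset (Sym2 Pt), IsNCMatching S M ∧ HasPiercing S M) ∨
    (k = 3 ∧ ∀ P ∈ S, P ≠ Q →
      (S.filter (fun X => 0 < sideOf Q P X)).card = 2 ∧
      (S.filter (fun X => sideOf Q P X < 0)).card = 2) := by
  have hQi : Q ∈ interior (convexHull ℝ (S : Set Pt)) := by
    have : Q ∈ (↑S ∩ interior (convexHull ℝ (S : Set Pt))) := by rw [hint]; rfl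
    exact this.2
  have hfr : ∀ P ∈ S, P ≠ Q → P ∈ frontier (convexHull ℝ (S : Set Pt)) := by
    intro P hP hPQ
    refine ⟨subset_closure (subset_convexHull ℝ _ hP), fun h => hPQ ?_⟩
    have : P ∈ (↑S ∩ interior (convexHull ℝ (S : Set Pt))) := ⟨hP, h⟩
    rw [hint] at this
    exact this
  have hdec : ∀ P ∈ S, P ≠ Q → S = (S.filter (fun X => sideOf Q P X < 0)) ∪
      ({P, Q} ∪ S.filter (fun X => 0 < sideOf Q P X)) := by
    intro P hP hPQ
    ext X
    simp only [Finset.mem_union, Finset.mem_insert, Finset.mem_singleton, Finset.mem_filter]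
    constructor
    · intro h
      by_cases h1 : X = P
      · tauto
      by_cases h2 : X = Q
      · tauto
      have := gp_side S hgp Q P X hQ hP h hPQ.symm (Ne.symm h2) (Ne.symm h1)
      rcases lt_or_gt_of_ne this with h | h <;> tauto
    · rintro (h | (rfl | rfl) | h)
      · exact h.1
      · exact hP
      · exact hQ
      · exact h.1
  have hsum : ∀ P ∈ S, P ≠ Q → (S.filter (fun X => sideOf Q P X < 0)).card +
      (S.filter (fun X => 0 < sideOf Q P X)).card + 2 = 2 * k := by
    intro P hP hPQ
    rw [← hcard]
    conv_rhs => rw [hdec P hP hPQ]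
    rw [Finset.card_union_of_disjoint, Finset.card_union_of_disjoint, Finset.card_pair hPQ]
    · ring
    · rw [Finset.disjoint_left]
      intro X hX hX'
      have := (Finset.mem_filter.1 hX').2
      simp only [Finset.mem_insert, Finset.mem_singleton] at hX
      rcases hX with rfl | rfl
      · rw [sideOf_right] at this; exact lt_irrefl _ this
      · rw [sideOf_left] at this; exact lt_irrefl _ this
    · rw [Finset.disjoint_left]
      intro X hX hX'
      have := (Finset.mem_filter.1 hX).2
      simp only [Finset.mem_union, Finset.mem_insert, Finset.mem_singleton,
        Finset.mem_filter] at hX'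
      rcases hX' with (rfl | rfl) | h
      · rw [sideOf_right] at this; exact lt_irrefl _ this
      · rw [sideOf_left] at this; exact lt_irrefl _ this
      · linarith [h.2]
  -- existence of a pair above
  have hpair : ∀ P ∈ S, P ≠ Q → ∃ A ∈ S.filter (fun X => sideOf Q P X < 0),
      ∃ B ∈ S.filter (fun X => 0 < sideOf Q P X), sideOf A B Q < 0 := by
    intro P hP hPQ
    obtain ⟨X, hX, hXs⟩ := interior_side S P Q hPQ hQi
    obtain ⟨A, hA, hmax⟩ := Finset.exists_max_image (S.filter (fun X => sideOf Q P X < 0))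
      (slp Q P) ⟨X, Finset.mem_filter.2 ⟨hX, hXs⟩⟩
    have hA' := Finset.mem_filter.1 hA
    have hAQ : A ≠ Q := by
      rintro rfl
      have := hA'.2
      rw [sideOf_left] at this; exact lt_irrefl _ this
    obtain ⟨B, hB, hBs⟩ := interior_side S A Q hAQ hQi
    refine ⟨A, hA, B, ?_, by rw [side_rot]; exact hBs⟩
    have hB' := hB
    rw [hdec P hP hPQ] at hB'
    simp only [Finset.mem_union, Finset.mem_insert, Finset.mem_singleton] at hB'
    rcases hB' with h | (rfl | rfl) | h
    · have h1 := hmax B h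
      have h2 := (slp_LL P Q A B hPQ hA'.2 (Finset.mem_filter.1 h).2).1 hBs
      linarith
    · have h2 := hA'.2
      have : sideOf Q A B = - sideOf Q B A := by simp only [sideOf]; ring
      linarith
    · rw [sideOf_left] at hBs; exact (lt_irrefl _ hBs).elim
    · exact h
  by_cases hodd : ∃ P ∈ S, P ≠ Q ∧ Odd (S.filter (fun X => sideOf Q P X < 0)).card
  · left
    obtain ⟨P, hP, hPQ, ho⟩ := hodd
    have hs := hsum P hP hPQ
    have hd := hdec P hP hPQ
    obtain ⟨A, hA, B, hB, hAB⟩ := hpair P hP hPQ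
    have hLS : (S.filter (fun X => sideOf Q P X < 0)) ⊆ S := Finset.filter_subset _ _
    have hRS : (S.filter (fun X => 0 < sideOf Q P X)) ⊆ S := Finset.filter_subset _ _
    have hLs : ∀ X ∈ (S.filter (fun X => sideOf Q P X < 0)), sideOf Q P X < 0 :=
      fun X hX => (Finset.mem_filter.1 hX).2
    have hRs : ∀ X ∈ (S.filter (fun X => 0 < sideOf Q P X)), 0 < sideOf Q P X :=
      fun X hX => (Finset.mem_filter.1 hX).2
    generalize (S.filter (fun X => sideOf Q P X < 0)) = L at *
    generalize (S.filter (fun X => 0 < sideOf Q P X)) = R at *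
    obtain ⟨C, hC, D, hD, hCD, hCQ, hCP, hbelow⟩ :=
      top_pair S hgp P Q L R hLS hRS hLs hRs A B hA hB hAB
    have cC := Finset.card_erase_of_mem hC
    have cD := Finset.card_erase_of_mem hD
    have pC : 0 < L.card := Finset.card_pos.2 ⟨C, hC⟩
    have pD : 0 < R.card := Finset.card_pos.2 ⟨D, hD⟩
    have hLCR : ∀ X ∈ L, X ∈ R → False := fun X h h' => by linarith [hLs X h, hRs X h']
    obtain ⟨j, hj⟩ := ho
    obtain ⟨M, hM, hPQM⟩ := base_matching P Q hPQ (L.erase C) (R.erase D)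
      (by rw [cC]; exact ⟨j, by omega⟩)
      (by rw [cD]; exact ⟨k - 2 - j, by omega⟩)
      (fun X hX => hLs X (Finset.mem_of_mem_erase hX))
      (fun X hX => hRs X (Finset.mem_of_mem_erase hX))
    have hN := add_pair C D hCD _ M hM (by
      intro X hX
      simp only [Finset.mem_union, Finset.mem_insert, Finset.mem_singleton,
        Finset.mem_erase] at hX
      rcases hX with ⟨h1, h2⟩ | (rfl | rfl) | ⟨h1, h2⟩
      · exact hbelow X (Finset.mem_union_left _ h2) h1 (by rintro rfl; exact hLCR _ h2 hD)
      · exact hCP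
      · exact hCQ
      · exact hbelow X (Finset.mem_union_right _ h2) (by rintro rfl; exact hLCR _ hC h2) h1)
    have hSeq : (L.erase C ∪ ({P, Q} ∪ R.erase D)) ∪ {C, D} = S := by
      rw [hd]
      ext X
      simp only [Finset.mem_union, Finset.mem_insert, Finset.mem_singleton, Finset.mem_erase]
      by_cases h1 : X = C
      · subst h1; tauto
      by_cases h2 : X = D
      · subst h2; tauto
      tauto
    rw [hSeq] at hN
    exact ⟨_, hN, P, Q, C, D, Finset.mem_union_left _ hPQM, by simp, hfr P hP hPQ,
      pierce_of P Q C D hPQ (hLs C hC) (hRs D hD) hCQ hCP⟩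
  · push Not at hodd
    have heven : ∀ P ∈ S, P ≠ Q → Even (S.filter (fun X => sideOf Q P X < 0)).card ∧
        Even (S.filter (fun X => 0 < sideOf Q P X)).card := by
      intro P hP hPQ
      have h1 := hodd P hP hPQ
      rw [Nat.not_odd_iff_even] at h1
      refine ⟨h1, ?_⟩
      have := hsum P hP hPQ
      obtain ⟨j, hj⟩ := h1
      exact ⟨k - 1 - j, by omega⟩
    have hge : ∀ P ∈ S, P ≠ Q → 2 ≤ (S.filter (fun X => sideOf Q P X < 0)).card ∧
        2 ≤ (S.filter (fun X => 0 < sideOf Q P X)).card := by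
      intro P hP hPQ
      obtain ⟨A, hA, B, hB, -⟩ := hpair P hP hPQ
      have h1 := Finset.card_pos.2 ⟨A, hA⟩
      have h2 := Finset.card_pos.2 ⟨B, hB⟩
      obtain ⟨⟨i, hi⟩, ⟨j, hj⟩⟩ := heven P hP hPQ
      omega
    by_cases hk : k = 3
    · right
      refine ⟨hk, fun P hP hPQ => ?_⟩
      have := hge P hP hPQ
      have := hsum P hP hPQ
      omega
    left
    have hSpos : 0 < S.card := Finset.card_pos.2 ⟨Q, hQ⟩
    obtain ⟨P, hP, hPQ⟩ := Finset.exists_mem_ne (s := S) (by omega) Q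
    have hs := hsum P hP hPQ
    have hd := hdec P hP hPQ
    have hev := heven P hP hPQ
    have hg := hge P hP hPQ
    obtain ⟨A, hA, B, hB, hAB⟩ := hpair P hP hPQ
    have hLS : (S.filter (fun X => sideOf Q P X < 0)) ⊆ S := Finset.filter_subset _ _
    have hRS : (S.filter (fun X => 0 < sideOf Q P X)) ⊆ S := Finset.filter_subset _ _
    have hLs : ∀ X ∈ (S.filter (fun X => sideOf Q P X < 0)), sideOf Q P X < 0 :=
      fun X hX => (Finset.mem_filter.1 hX).2
    have hRs : ∀ X ∈ (S.filter (fun X => 0 < sideOf Q P X)), 0 < sideOf Q P X :=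
      fun X hX => (Finset.mem_filter.1 hX).2
    generalize (S.filter (fun X => sideOf Q P X < 0)) = L at *
    generalize (S.filter (fun X => 0 < sideOf Q P X)) = R at *
    have hLCR : ∀ X ∈ L, X ∈ R → False := fun X h h' => by linarith [hLs X h, hRs X h']
    have hneQ : ∀ X, sideOf Q P X ≠ 0 → X ≠ Q := by
      rintro X h rfl
      exact h (sideOf_left _ _)
    have hparL : ∀ A ∈ L, Even ((L.filter (fun X => slp Q P A < slp Q P X)).card +
        (R.filter (fun B => 0 < slp Q P A + slp Q P B)).card) := by
      intro A hA
      have hAs := hLs A hA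
      have := (heven A (hLS hA) (hneQ A hAs.ne)).1
      rw [← Finset.card_union_of_disjoint (Finset.disjoint_left.2 fun X h1 h2 =>
        hLCR X (Finset.mem_filter.1 h1).1 (Finset.mem_filter.1 h2).1)]
      convert this using 2
      ext X
      simp only [Finset.mem_union, Finset.mem_filter]
      constructor
      · rintro (⟨h1, h2⟩ | ⟨h1, h2⟩)
        · exact ⟨hLS h1, (slp_LL P Q A X hPQ hAs (hLs X h1)).2 h2⟩
        · exact ⟨hRS h1, (slp_LR P Q A X hPQ hAs (hRs X h1)).2 h2⟩
      · rintro ⟨h1, h2⟩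
        rw [hd] at h1
        simp only [Finset.mem_union, Finset.mem_insert, Finset.mem_singleton] at h1
        rcases h1 with h | (rfl | rfl) | h
        · exact Or.inl ⟨h, (slp_LL P Q A X hPQ hAs (hLs X h)).1 h2⟩
        · have : sideOf Q A X = - sideOf Q X A := by simp only [sideOf]; ring
          linarith
        · rw [sideOf_left] at h2; exact (lt_irrefl _ h2).elim
        · exact Or.inr ⟨h, (slp_LR P Q A X hPQ hAs (hRs X h)).1 h2⟩
    have hparR : ∀ A ∈ R, Even ((R.filter (fun X => slp Q P A < slp Q P X)).card +
        (L.filter (fun B => 0 < slp Q P A + slp Q P B)).card) := by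
      intro A hA
      have hAs := hRs A hA
      have := (heven A (hRS hA) (hneQ A hAs.ne')).2
      rw [← Finset.card_union_of_disjoint (Finset.disjoint_left.2 fun X h1 h2 =>
        hLCR X (Finset.mem_filter.1 h2).1 (Finset.mem_filter.1 h1).1)]
      convert this using 2
      ext X
      simp only [Finset.mem_union, Finset.mem_filter]
      constructor
      · rintro (⟨h1, h2⟩ | ⟨h1, h2⟩)
        · exact ⟨hRS h1, (slp_RR P Q A X hPQ hAs (hRs X h1)).2 h2⟩
        · exact ⟨hLS h1, (slp_RL P Q A X hPQ hAs (hLs X h1)).2 h2⟩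
      · rintro ⟨h1, h2⟩
        rw [hd] at h1
        simp only [Finset.mem_union, Finset.mem_insert, Finset.mem_singleton] at h1
        rcases h1 with h | (rfl | rfl) | h
        · exact Or.inr ⟨h, (slp_RL P Q A X hPQ hAs (hLs X h)).1 h2⟩
        · have : sideOf Q A X = - sideOf Q X A := by simp only [sideOf]; ring
          linarith
        · rw [sideOf_left] at h2; exact (lt_irrefl _ h2).elim
        · exact Or.inl ⟨h, (slp_RR P Q A X hPQ hAs (hRs X h)).1 h2⟩
    have hinjL : ∀ X ∈ L, ∀ Y ∈ L, slp Q P X = slp Q P Y → X = Y := by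
      intro X hX Y hY h
      by_contra hne
      have hs := gp_side S hgp Q X Y hQ (hLS hX) (hLS hY) (hneQ X (hLs X hX).ne).symm
        (hneQ Y (hLs Y hY).ne).symm hne
      rcases lt_or_gt_of_ne hs with h' | h'
      · have := (slp_LL P Q X Y hPQ (hLs X hX) (hLs Y hY)).1 h'
        linarith
      · have := (slp_LL P Q Y X hPQ (hLs Y hY) (hLs X hX)).1 (by
          have : sideOf Q Y X = - sideOf Q X Y := by simp only [sideOf]; ring
          linarith)
        linarith
    have hinjR : ∀ X ∈ R, ∀ Y ∈ R, slp Q P X = slp Q P Y → X = Y := by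
      intro X hX Y hY h
      by_contra hne
      have hs := gp_side S hgp Q X Y hQ (hRS hX) (hRS hY) (hneQ X (hRs X hX).ne').symm
        (hneQ Y (hRs Y hY).ne').symm hne
      rcases lt_or_gt_of_ne hs with h' | h'
      · have := (slp_RR P Q Y X hPQ (hRs Y hY) (hRs X hX)).1 (by
          have : sideOf Q Y X = - sideOf Q X Y := by simp only [sideOf]; ring
          linarith)
        linarith
      · have := (slp_RR P Q X Y hPQ (hRs X hX) (hRs Y hY)).1 h'
        linarith
    obtain ⟨C, hC, D, hD, hCD, hCQ, hCP, hbelow⟩ :=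
      top_pair S hgp P Q L R hLS hRS hLs hRs A B hA hB hAB
    have hpair2 : ∃ A ∈ L.erase C, ∃ B ∈ R.erase D, sideOf A B Q < 0 := by
      have h4 : 4 ≤ L.card ∨ 4 ≤ R.card := by
        obtain ⟨⟨i, hi⟩, ⟨j, hj⟩⟩ := hev
        omega
      rcases h4 with h4 | h4
      · obtain ⟨A, hA, hAC, B, hB, hBD, hpos⟩ := comb L R (slp Q P) hinjL hparL h4 C D hC
        refine ⟨A, Finset.mem_erase.2 ⟨hAC, hA⟩, B, Finset.mem_erase.2 ⟨hBD, hB⟩, ?_⟩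
        rw [side_rot]
        exact (slp_LR P Q A B hPQ (hLs A hA) (hRs B hB)).2 hpos
      · obtain ⟨B, hB, hBD, A, hA, hAC, hpos⟩ := comb R L (slp Q P) hinjR hparR h4 D C hD
        refine ⟨A, Finset.mem_erase.2 ⟨hAC, hA⟩, B, Finset.mem_erase.2 ⟨hBD, hB⟩, ?_⟩
        rw [side_rot]
        exact (slp_LR P Q A B hPQ (hLs A hA) (hRs B hB)).2 (by linarith)
    obtain ⟨A', hA', B', hB', hAB'⟩ := hpair2
    obtain ⟨C', hC', D', hD', hCD', hCQ', hCP', hbelow'⟩ :=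
      top_pair S hgp P Q (L.erase C) (R.erase D)
        ((Finset.erase_subset _ _).trans hLS) ((Finset.erase_subset _ _).trans hRS)
        (fun X hX => hLs X (Finset.mem_of_mem_erase hX))
        (fun X hX => hRs X (Finset.mem_of_mem_erase hX)) A' B' hA' hB' hAB'
    have cC := Finset.card_erase_of_mem hC
    have cD := Finset.card_erase_of_mem hD
    have cC' := Finset.card_erase_of_mem hC'
    have cD' := Finset.card_erase_of_mem hD'
    obtain ⟨⟨i, hi⟩, ⟨j, hj⟩⟩ := hev
    obtain ⟨M, hM, hPQM⟩ := base_matching P Q hPQ ((L.erase C).erase C') ((R.erase D).erase D')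
      (by rw [cC', cC]; exact ⟨i - 1, by omega⟩)
      (by rw [cD', cD]; exact ⟨j - 1, by omega⟩)
      (fun X hX => hLs X (Finset.mem_of_mem_erase (Finset.mem_of_mem_erase hX)))
      (fun X hX => hRs X (Finset.mem_of_mem_erase (Finset.mem_of_mem_erase hX)))
    have hC'L := Finset.mem_of_mem_erase hC'
    have hD'R := Finset.mem_of_mem_erase hD'
    have hC'ne := Finset.ne_of_mem_erase hC'
    have hD'ne := Finset.ne_of_mem_erase hD'
    have hN := add_pair C' D' hCD' _ M hM (by
      intro X hX
      simp only [Finset.mem_union, Finset.mem_insert, Finset.mem_singleton] at hX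
      rcases hX with h | (rfl | rfl) | h
      · have h1 := Finset.mem_of_mem_erase h
        exact hbelow' X (Finset.mem_union_left _ h1) (Finset.ne_of_mem_erase h)
          (by rintro rfl; exact hLCR _ (Finset.mem_of_mem_erase h1) hD'R)
      · exact hCP'
      · exact hCQ'
      · have h1 := Finset.mem_of_mem_erase h
        exact hbelow' X (Finset.mem_union_right _ h1)
          (by rintro rfl; exact hLCR _ hC'L (Finset.mem_of_mem_erase h1))
          (Finset.ne_of_mem_erase h))
    have bL : ∀ X ∈ L, X ≠ C → sideOf C D X < 0 := fun X h1 h2 =>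
      hbelow X (Finset.mem_union_left _ h1) h2 (by rintro rfl; exact hLCR _ h1 hD)
    have bR : ∀ X ∈ R, X ≠ D → sideOf C D X < 0 := fun X h1 h2 =>
      hbelow X (Finset.mem_union_right _ h1) (by rintro rfl; exact hLCR _ hC h1) h2
    have hN2 := add_pair C D hCD _ _ hN (by
      intro X hX
      simp only [Finset.mem_union, Finset.mem_insert, Finset.mem_singleton,
        Finset.mem_erase] at hX
      rcases hX with (⟨-, h1, h2⟩ | (rfl | rfl) | ⟨-, h1, h2⟩) | (rfl | rfl)
      · exact bL X h2 h1
      · exact hCP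
      · exact hCQ
      · exact bR X h2 h1
      · exact bL _ hC'L hC'ne
      · exact bR _ hD'R hD'ne)
    have hSeq : ((L.erase C).erase C' ∪ ({P, Q} ∪ (R.erase D).erase D')) ∪ {C', D'} ∪ {C, D}
        = S := by
      rw [hd]
      ext X
      simp only [Finset.mem_union, Finset.mem_insert, Finset.mem_singleton, Finset.mem_erase]
      by_cases h1 : X = C
      · subst h1; tauto
      by_cases h2 : X = D
      · subst h2; tauto
      by_cases h3 : X = C'
      · subst h3; tauto
      by_cases h4 : X = D'
      · subst h4; tauto
      tauto
    rw [hSeq] at hN2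
    exact ⟨_, hN2, P, Q, C', D', Finset.mem_union_left _ (Finset.mem_union_left _ hPQM),
      by simp, hfr P hP hPQ,
      pierce_of P Q C' D' hPQ (hLs C' hC'L) (hRs D' hD'R) hCQ' hCP'⟩
end
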